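/- arXiv:2310.17635 — 3 statements merged into one kernel-verified Lean document; each statement's English description precedes it below -/
import Mathlib

section
/- Fix d > 0. Let A be an n×n random matrix with independent Ber(d/n) entries. Let ℓ = ⌊(log n)²⌋ and let B be an n×n random matrix with independent {0,1}-entries where B_{ij} = 1 with probability d/n if max(i,j) ≤ n−ℓ and with probability √(log n)/n otherwise. Let P_σ be a uniformly random n×n permutation matrix, independent of B. Then for all sufficiently large n, the total variation distance between the law of A and the law of P_σ^T B P_σ is at most n^{−1/4}. -/
open MeasureTheory Matrix

/-- The Bernoulli measure on `ℝ`, putting mass `p` at `1` and mass `1 - p` at `0`. -/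
noncomputable def bernoulliR (p : ℝ) : Measure ℝ :=
  ENNReal.ofReal p • Measure.dirac 1 + ENNReal.ofReal (1 - p) • Measure.dirac 0

/-- The law of an `n × n` matrix with iid `Ber(p)` entries. -/
noncomputable def iidMatrixLawR (n : ℕ) (p : ℝ) : Measure (Fin n → Fin n → ℝ) :=
  Measure.pi fun _ => Measure.pi fun _ => bernoulliR p

/-- The law of the matrix `B`: entries are independent, equal to `1` with probability `d/n`
if `max(i,j) ≤ n - ℓ` (with `ℓ = ⌊(log n)²⌋`, indices being `1`-based) and with probability
`√(log n)/n` otherwise. -/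
noncomputable def lawB (n : ℕ) (d : ℝ) : Measure (Fin n → Fin n → ℝ) :=
  Measure.pi fun i => Measure.pi fun j =>
    if (i : ℕ) + 1 ≤ n - ⌊(Real.log n) ^ 2⌋₊ ∧ (j : ℕ) + 1 ≤ n - ⌊(Real.log n) ^ 2⌋₊ then
      bernoulliR (d / n)
    else bernoulliR (Real.sqrt (Real.log n) / n)

noncomputable instance (n : ℕ) : MeasurableSpace (Equiv.Perm (Fin n)) := ⊤

/-- The uniform probability measure on permutations of `[n]`. -/
noncomputable def uniformPerm (n : ℕ) : Measure (Equiv.Perm (Fin n)) :=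
  (Fintype.card (Equiv.Perm (Fin n)) : ENNReal)⁻¹ • Measure.count

/-- The law of `P_σᵀ B P_σ` where `σ` is a uniformly random permutation independent of `B`. -/
noncomputable def lawConjB (n : ℕ) (d : ℝ) : Measure (Fin n → Fin n → ℝ) :=
  ((uniformPerm n).prod (lawB n d)).map
    (fun p => fun i j => ((p.1.permMatrix ℝ)ᵀ * Matrix.of p.2 * p.1.permMatrix ℝ) i j)


section FiniteEx
variable {ι : Type*} [Fintype ι] [DecidableEq ι]

/-- Bernoulli product weight. -/
noncomputable def wt (P : ι → ℝ) (x : ι → Bool) : ℝ := ∏ e, (if x e then P e else 1 - P e)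

/-- Expectation under the Bernoulli product weight. -/
noncomputable def Ex (P : ι → ℝ) (F : (ι → Bool) → ℝ) : ℝ := ∑ x, wt P x * F x

lemma wt_nonneg {P : ι → ℝ} (hP : ∀ e, 0 ≤ P e ∧ P e ≤ 1) (x : ι → Bool) : 0 ≤ wt P x := by
  unfold wt
  refine Finset.prod_nonneg fun e _ => ?_
  have := hP e
  split_ifs <;> linarith

lemma Ex_mono {P : ι → ℝ} (hP : ∀ e, 0 ≤ P e ∧ P e ≤ 1) {F G : (ι → Bool) → ℝ}
    (h : ∀ x, F x ≤ G x) : Ex P F ≤ Ex P G :=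
  Finset.sum_le_sum fun x _ => mul_le_mul_of_nonneg_left (h x) (wt_nonneg hP x)

lemma Ex_add (P : ι → ℝ) (F G : (ι → Bool) → ℝ) :
    Ex P (fun x => F x + G x) = Ex P F + Ex P G := by
  simp [Ex, mul_add, Finset.sum_add_distrib]

lemma Ex_sub (P : ι → ℝ) (F G : (ι → Bool) → ℝ) :
    Ex P (fun x => F x - G x) = Ex P F - Ex P G := by
  simp [Ex, mul_sub, Finset.sum_sub_distrib]

lemma Ex_smul (P : ι → ℝ) (c : ℝ) (F : (ι → Bool) → ℝ) :
    Ex P (fun x => c * F x) = c * Ex P F := by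
  simp only [Ex, Finset.mul_sum]
  exact Finset.sum_congr rfl fun x _ => by ring

lemma Ex_sum {κ : Type*} (P : ι → ℝ) (s : Finset κ) (F : κ → (ι → Bool) → ℝ) :
    Ex P (fun x => ∑ k ∈ s, F k x) = ∑ k ∈ s, Ex P (F k) := by
  simp only [Ex, Finset.mul_sum]
  exact Finset.sum_comm

lemma Ex_prod (P : ι → ℝ) (g : ι → Bool → ℝ) :
    Ex P (fun x => ∏ e, g e (x e)) = ∏ e, (P e * g e true + (1 - P e) * g e false) := by
  have h : ∀ e, P e * g e true + (1 - P e) * g e false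
      = ∑ b : Bool, (if b then P e else 1 - P e) * g e b := by
    intro e; simp
  simp only [h, Ex, wt, ← Finset.prod_mul_distrib]
  rw [Finset.prod_univ_sum, Fintype.piFinset_univ]

lemma Ex_one (P : ι → ℝ) : Ex P (fun _ => 1) = 1 := by
  have := Ex_prod P (fun _ _ => 1)
  simpa using this

lemma Ex_const (P : ι → ℝ) (c : ℝ) : Ex P (fun _ => c) = c := by
  have := Ex_smul P c (fun _ => 1)
  simpa [Ex_one] using this

lemma Ex_prod_mem (P : ι → ℝ) (C : Finset ι) (g : ι → Bool → ℝ) :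
    Ex P (fun x => ∏ e ∈ C, g e (x e)) = ∏ e ∈ C, (P e * g e true + (1 - P e) * g e false) := by
  have := Ex_prod P (fun e b => if e ∈ C then g e b else 1)
  simp only [Finset.prod_ite_mem, Finset.univ_inter] at this
  rw [this, ← Finset.univ_inter C, ← Finset.prod_ite_mem, Finset.univ_inter]
  refine Finset.prod_congr rfl fun e _ => ?_
  split_ifs <;> ring

lemma Ex_abs_le (P : ι → ℝ) (hP : ∀ e, 0 ≤ P e ∧ P e ≤ 1) (F : (ι → Bool) → ℝ) :
    |Ex P F| ≤ Ex P (fun x => |F x|) := by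
  unfold Ex
  refine (Finset.abs_sum_le_sum_abs _ _).trans (le_of_eq ?_)
  refine Finset.sum_congr rfl fun x _ => ?_
  rw [abs_mul, abs_of_nonneg (wt_nonneg hP x)]

lemma Ex_cs (P : ι → ℝ) (hP : ∀ e, 0 ≤ P e ∧ P e ≤ 1) (F : (ι → Bool) → ℝ) {a : ℝ} (ha : 0 ≤ a)
    (h : Ex P (fun x => F x ^ 2) ≤ a ^ 2) : Ex P (fun x => |F x|) ≤ a := by
  have h0 : 0 ≤ Ex P (fun x => (|F x| - Ex P (fun x => |F x|)) ^ 2) := by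
    rw [← Ex_const P 0]
    exact Ex_mono hP fun x => sq_nonneg _
  set b := Ex P (fun x => |F x|) with hb
  have h1 : Ex P (fun x => (|F x| - b) ^ 2) = Ex P (fun x => F x ^ 2) - b ^ 2 := by
    have : (fun x => (|F x| - b) ^ 2) = fun x => (F x ^ 2 - (2 * b) * |F x|) + b ^ 2 := by
      funext x; rw [sub_sq, sq_abs]; ring
    rw [this, Ex_add, Ex_sub, Ex_smul, Ex_const, ← hb]; ring
  exact abs_le_of_sq_le_sq' (by linarith) ha |>.2

lemma Ex_indep (P : ι → ℝ) (A : Finset ι) (F G : (ι → Bool) → ℝ)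
    (hF : ∀ x y, (∀ e ∈ A, x e = y e) → F x = F y)
    (hG : ∀ x y, (∀ e, e ∉ A → x e = y e) → G x = G y) :
    Ex P (fun x => F x * G x) = Ex P F * Ex P G := by
  classical
  let φ := Equiv.piEquivPiSubtypeProd (fun e => e ∈ A) (fun _ : ι => Bool)
  let W1 : ({e // e ∈ A} → Bool) → ℝ := fun a => ∏ e, (if a e then P e else 1 - P e)
  let W2 : ({e // e ∉ A} → Bool) → ℝ := fun a => ∏ e, (if a e then P e else 1 - P e)
  have hw : ∀ a b, wt P (φ.symm (a, b)) = W1 a * W2 b := by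
    intro a b
    simp only [wt, W1, W2]
    rw [← Fintype.prod_subtype_mul_prod_subtype (fun e => e ∈ A)]
    congr 1
    · refine Finset.prod_congr (by ext; simp) fun e _ => ?_
      simp [φ, Equiv.piEquivPiSubtypeProd]
    · refine Finset.prod_congr rfl fun e _ => ?_
      simp [φ, Equiv.piEquivPiSubtypeProd, e.2]
  let a0 : {e // e ∈ A} → Bool := fun _ => false
  let b0 : {e // e ∉ A} → Bool := fun _ => false
  have hF' : ∀ a b, F (φ.symm (a, b)) = F (φ.symm (a, b0)) := by
    intro a b
    refine hF _ _ fun e he => ?_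
    simp [φ, Equiv.piEquivPiSubtypeProd, he]
  have hG' : ∀ a b, G (φ.symm (a, b)) = G (φ.symm (a0, b)) := by
    intro a b
    refine hG _ _ fun e he => ?_
    simp [φ, Equiv.piEquivPiSubtypeProd, he]
  have key : ∀ H : (ι → Bool) → ℝ, Ex P H = ∑ a, ∑ b, W1 a * W2 b * H (φ.symm (a, b)) := by
    intro H
    unfold Ex
    rw [← φ.symm.sum_comp, Fintype.sum_prod_type]
    simp only [hw]
  have e1 : Ex P F = (∑ a, W1 a * F (φ.symm (a, b0))) * ∑ b, W2 b := by
    rw [key, Finset.sum_mul_sum]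
    refine Finset.sum_congr rfl fun a _ => Finset.sum_congr rfl fun b _ => ?_
    rw [hF' a b]; ring
  have e2 : Ex P G = (∑ a, W1 a) * ∑ b, W2 b * G (φ.symm (a0, b)) := by
    rw [key, Finset.sum_mul_sum]
    refine Finset.sum_congr rfl fun a _ => Finset.sum_congr rfl fun b _ => ?_
    rw [hG' a b]; ring
  have e3 : Ex P (fun x => F x * G x) = (∑ a, W1 a * F (φ.symm (a, b0))) *
      ∑ b, W2 b * G (φ.symm (a0, b)) := by
    rw [key, Finset.sum_mul_sum]
    refine Finset.sum_congr rfl fun a _ => Finset.sum_congr rfl fun b _ => ?_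
    rw [hF' a b, hG' a b]; ring
  have e4 : (1 : ℝ) = (∑ a, W1 a) * ∑ b, W2 b := by
    rw [← Ex_one P, key, Finset.sum_mul_sum]
    simp
  rw [e1, e2, e3]
  linear_combination (∑ a, W1 a * F (φ.symm (a, b0))) *
      (∑ b, W2 b * G (φ.symm (a0, b))) * e4

/-- Abstract truncated second moment bound. -/
lemma second_moment {κ : Type*} [DecidableEq κ] (P : ι → ℝ) (hP : ∀ e, 0 ≤ P e ∧ P e ≤ 1) (V : Finset κ)
    (Lk X : κ → (ι → Bool) → ℝ) (F : (ι → Bool) → ℝ) (hF : ∀ x, 0 ≤ F x ∧ F x ≤ 1)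
    {δ T η a : ℝ} (ha : 0 ≤ a) (hη : 0 ≤ η)
    (hXL : ∀ v ∈ V, ∀ x, X v x ≤ Lk v x)
    (hL : ∀ v ∈ V, Ex P (Lk v) = 1)
    (hδ : ∀ v ∈ V, 1 - δ ≤ Ex P (X v))
    (hX2 : ∀ v ∈ V, Ex P (fun x => X v x * X v x) ≤ T)
    (hcov : ∀ v ∈ V, ∀ w ∈ V, v ≠ w → Ex P (fun x => X v x * X w x) ≤ Ex P (X v) * Ex P (X w) + η)
    (hκ : (V.card : ℝ) * T + (V.card : ℝ) ^ 2 * η ≤ ((V.card : ℝ) * a) ^ 2) :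
    |∑ v ∈ V, (Ex P (fun x => Lk v x * F x) - Ex P F)| ≤ V.card * (2 * δ + a) := by
  have h1 : ∑ v ∈ V, (Ex P (fun x => Lk v x * F x) - Ex P F)
      = Ex P (fun x => (∑ v ∈ V, (Lk v x - 1)) * F x) := by
    simp only [Finset.sum_mul]
    rw [Ex_sum]
    refine Finset.sum_congr rfl fun v _ => ?_
    rw [← Ex_sub]; congr 1; funext x; ring
  have hvar : Ex P (fun x => (∑ v ∈ V, (X v x - Ex P (X v))) ^ 2) ≤ ((V.card : ℝ) * a) ^ 2 := by
    refine le_trans ?_ hκ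
    have : Ex P (fun x => (∑ v ∈ V, (X v x - Ex P (X v))) ^ 2)
        = ∑ v ∈ V, ∑ w ∈ V, (Ex P (fun x => X v x * X w x) - Ex P (X v) * Ex P (X w)) := by
      simp only [sq, Finset.sum_mul_sum]
      rw [Ex_sum]
      refine Finset.sum_congr rfl fun v _ => ?_
      rw [Ex_sum]
      refine Finset.sum_congr rfl fun w _ => ?_
      have : (fun x => (X v x - Ex P (X v)) * (X w x - Ex P (X w))) =
        fun x => ((X v x * X w x - Ex P (X w) * X v x) - Ex P (X v) * X w x)
          + Ex P (X v) * Ex P (X w) := by funext x; ring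
      rw [this, Ex_add, Ex_sub, Ex_sub, Ex_smul, Ex_smul, Ex_const]; ring
    rw [this]
    calc _ ≤ ∑ v ∈ V, ∑ w ∈ V, ((if v = w then T else 0) + η) := by
          refine Finset.sum_le_sum fun v hv => Finset.sum_le_sum fun w hw => ?_
          split_ifs with h
          · subst h
            have := hX2 v hv
            nlinarith [mul_self_nonneg (Ex P (X v))]
          · have := hcov v hv w hw h
            linarith
      _ = _ := by
          simp only [Finset.sum_add_distrib, Finset.sum_ite_eq, Finset.sum_const, nsmul_eq_mul]
          simp; ring
  have hdev := Ex_cs P hP _ (by positivity) hvar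
  have hEX : ∀ v ∈ V, Ex P (X v) ≤ 1 := fun v hv => (Ex_mono hP (hXL v hv)).trans (hL v hv).le
  rw [h1]
  refine (Ex_abs_le P hP _).trans ?_
  have hb : ∀ x, |(∑ v ∈ V, (Lk v x - 1)) * F x| ≤
      (∑ v ∈ V, (Lk v x - X v x)) + |∑ v ∈ V, (X v x - Ex P (X v))| + ∑ v ∈ V, (1 - Ex P (X v)) := by
    intro x
    have e : ∑ v ∈ V, (Lk v x - 1) = (∑ v ∈ V, (Lk v x - X v x)) + (∑ v ∈ V, (X v x - Ex P (X v)))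
        - ∑ v ∈ V, (1 - Ex P (X v)) := by
      rw [← Finset.sum_add_distrib, ← Finset.sum_sub_distrib]
      exact Finset.sum_congr rfl fun v _ => by ring
    have p1 : 0 ≤ ∑ v ∈ V, (Lk v x - X v x) :=
      Finset.sum_nonneg fun v hv => by linarith [hXL v hv x]
    have p2 : 0 ≤ ∑ v ∈ V, (1 - Ex P (X v)) :=
      Finset.sum_nonneg fun v hv => by linarith [hEX v hv]
    rw [abs_mul, abs_of_nonneg (hF x).1]
    refine (mul_le_of_le_one_right (abs_nonneg _) (hF x).2).trans ?_
    rw [e]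
    rw [abs_le]
    constructor <;> linarith [neg_abs_le (∑ v ∈ V, (X v x - Ex P (X v))),
      le_abs_self (∑ v ∈ V, (X v x - Ex P (X v)))]
  refine (Ex_mono hP hb).trans ?_
  rw [Ex_add, Ex_add, Ex_sum, Ex_const]
  have q1 : ∑ v ∈ V, Ex P (fun x => Lk v x - X v x) ≤ V.card * δ := by
    rw [← nsmul_eq_mul]
    refine Finset.sum_le_card_nsmul _ _ _ fun v hv => ?_
    rw [Ex_sub, hL v hv]; linarith [hδ v hv]
  have q2 : ∑ v ∈ V, (1 - Ex P (X v)) ≤ V.card * δ := by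
    rw [← nsmul_eq_mul]
    refine Finset.sum_le_card_nsmul _ _ _ fun v hv => ?_
    linarith [hδ v hv]
  linarith

end FiniteEx
section Core
variable {n : ℕ}

/-- Entry probabilities with special set `S`. -/
noncomputable def PS (p q : ℝ) (S : Finset (Fin n)) (e : Fin n × Fin n) : ℝ :=
  if e.1 ∈ S ∨ e.2 ∈ S then q else p

/-- The cross of `v` outside `S`. -/
def Cr (S : Finset (Fin n)) (v : Fin n) : Finset (Fin n × Fin n) :=
  Finset.univ.filter fun e => e.1 ∉ S ∧ e.2 ∉ S ∧ (e.1 = v ∨ e.2 = v)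

/-- single entry likelihood ratio -/
noncomputable def rat (p q : ℝ) (b : Bool) : ℝ := if b then q / p else (1 - q) / (1 - p)

/-- likelihood ratio of the cross of `v`. -/
noncomputable def Lr (p q : ℝ) (S : Finset (Fin n)) (v : Fin n) (x : Fin n × Fin n → Bool) : ℝ :=
  ∏ e ∈ Cr S v, rat p q (x e)

/-- `u` to the degree. -/
noncomputable def Ud (u : ℝ) (S : Finset (Fin n)) (v : Fin n) (x : Fin n × Fin n → Bool) : ℝ :=
  ∏ e ∈ Cr S v, (if x e then u else 1)

open Classical in
/-- truncated likelihood ratio -/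
noncomputable def Xt (p q u τ : ℝ) (S : Finset (Fin n)) (v : Fin n) (x : Fin n × Fin n → Bool) : ℝ :=
  if Ud u S v x ≤ τ then Lr p q S v x else 0

lemma card_Cr (S : Finset (Fin n)) (v : Fin n) : (Cr S v).card ≤ 2 * n := by
  have : Cr S v ⊆ (Finset.univ.image fun j : Fin n => (v, j)) ∪ (Finset.univ.image fun j : Fin n => (j, v)) := by
    intro e he
    simp only [Cr, Finset.mem_filter, Finset.mem_univ, true_and] at he
    simp only [Finset.mem_union, Finset.mem_image, Finset.mem_univ, true_and]
    rcases he.2.2 with h | h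
    · left; exact ⟨e.2, by rw [← h]⟩
    · right; exact ⟨e.1, by rw [← h]⟩
  refine (Finset.card_le_card this).trans ((Finset.card_union_le _ _).trans ?_)
  have h1 := Finset.card_image_le (s := Finset.univ) (f := fun j : Fin n => (v, j))
  have h2 := Finset.card_image_le (s := Finset.univ) (f := fun j : Fin n => (j, v))
  simp only [Finset.card_univ, Fintype.card_fin] at h1 h2
  omega

lemma PS_Cr {p q : ℝ} {S : Finset (Fin n)} {v : Fin n} {e : Fin n × Fin n} (he : e ∈ Cr S v) :
    PS p q S e = p := by
  simp only [Cr, Finset.mem_filter, Finset.mem_univ, true_and] at he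
  simp [PS, he.1, he.2.1]

lemma rat_nonneg {p q : ℝ} (hp : 0 < p) (hp1 : p < 1) (hpq : p ≤ q) (hq : q < 1) (b : Bool) :
    0 ≤ rat p q b := by
  have : 0 < 1 - p := by linarith
  have : 0 < 1 - q := by linarith
  have : 0 < q := by linarith
  unfold rat; split_ifs <;> positivity

lemma rat_mean {p q : ℝ} (hp : 0 < p) (hp1 : p < 1) :
    p * rat p q true + (1 - p) * rat p q false = 1 := by
  have : 0 < 1 - p := by linarith
  simp only [rat]; simp; field_simp; ring

lemma Lr_nonneg {p q : ℝ} (hp : 0 < p) (hp1 : p < 1) (hpq : p ≤ q) (hq : q < 1)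
    (S : Finset (Fin n)) (v : Fin n) (x) : 0 ≤ Lr p q S v x :=
  Finset.prod_nonneg fun _ _ => rat_nonneg hp hp1 hpq hq _

lemma Ex_Lr {p q : ℝ} (hp : 0 < p) (hp1 : p < 1) (S : Finset (Fin n)) (v : Fin n) :
    Ex (PS p q S) (Lr p q S v) = 1 := by
  have := Ex_prod_mem (PS p q S) (Cr S v) (fun _ => rat p q)
  unfold Lr
  rw [this]
  refine Finset.prod_eq_one fun e he => ?_
  rw [PS_Cr he, rat_mean hp hp1]

lemma wt_insert {p q : ℝ} (hp : 0 < p) (hp1 : p < 1) (S : Finset (Fin n)) (v : Fin n) (hv : v ∉ S)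
    (x : Fin n × Fin n → Bool) :
    wt (PS p q (insert v S)) x = wt (PS p q S) x * Lr p q S v x := by
  have h1 : 0 < 1 - p := by linarith
  unfold wt Lr
  rw [← Finset.univ_inter (Cr S v), ← Finset.prod_ite_mem, ← Finset.prod_mul_distrib]
  refine Finset.prod_congr rfl fun e _ => ?_
  by_cases he : e ∈ Cr S v
  · rw [if_pos he, PS_Cr he]
    have : PS p q (insert v S) e = q := by
      simp only [Cr, Finset.mem_filter, Finset.mem_univ, true_and] at he
      rcases he.2.2 with h | h <;> simp [PS, h]
    rw [this]
    unfold rat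
    split_ifs <;> field_simp
  · rw [if_neg he, mul_one]
    have : PS p q (insert v S) e = PS p q S e := by
      simp only [Cr, Finset.mem_filter, Finset.mem_univ, true_and] at he
      simp only [PS, Finset.mem_insert]
      congr 1
      apply propext
      tauto
    rw [this]

lemma Ex_insert {p q : ℝ} (hp : 0 < p) (hp1 : p < 1) (S : Finset (Fin n)) (v : Fin n) (hv : v ∉ S)
    (F : (Fin n × Fin n → Bool) → ℝ) :
    Ex (PS p q (insert v S)) F = Ex (PS p q S) (fun x => Lr p q S v x * F x) := by
  unfold Ex
  refine Finset.sum_congr rfl fun x _ => ?_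
  rw [wt_insert hp hp1 S v hv, mul_assoc]

lemma PS_prob {p q : ℝ} (hp : 0 < p) (hp1 : p < 1) (hpq : p ≤ q) (hq : q < 1) (S : Finset (Fin n)) :
    ∀ e, 0 ≤ PS p q S e ∧ PS p q S e ≤ 1 := by
  intro e; unfold PS; split_ifs <;> constructor <;> linarith

lemma Xt_nonneg {p q u τ : ℝ} (hp : 0 < p) (hp1 : p < 1) (hpq : p ≤ q) (hq : q < 1)
    (S : Finset (Fin n)) (v : Fin n) (x) : 0 ≤ Xt p q u τ S v x := by
  unfold Xt; split_ifs
  · exact Lr_nonneg hp hp1 hpq hq S v x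
  · exact le_rfl

lemma Xt_le {p q u τ : ℝ} (hp : 0 < p) (hp1 : p < 1) (hpq : p ≤ q) (hq : q < 1)
    (S : Finset (Fin n)) (v : Fin n) (x) : Xt p q u τ S v x ≤ Lr p q S v x := by
  unfold Xt; split_ifs
  · exact le_rfl
  · exact Lr_nonneg hp hp1 hpq hq S v x

lemma Ex_Xt_sq {p q u τ : ℝ} (hp : 0 < p) (hp1 : p < 1) (hpq : p ≤ q) (hq : q < 1)
    (hu : 0 ≤ u) (huρ : u ^ 4 = q / p) (hτ : 0 ≤ τ)
    (S : Finset (Fin n)) (v : Fin n) :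
    Ex (PS p q S) (fun x => Xt p q u τ S v x * Xt p q u τ S v x) ≤ τ ^ 4 := by
  have h : ∀ x, Xt p q u τ S v x * Xt p q u τ S v x ≤ τ ^ 4 * Lr p q S v x := by
    intro x
    have hL := Lr_nonneg hp hp1 hpq hq S v x
    unfold Xt
    split_ifs with hx
    · refine mul_le_mul_of_nonneg_right ?_ hL
      have hU0 : 0 ≤ Ud u S v x := Finset.prod_nonneg fun e _ => by split_ifs <;> linarith
      calc Lr p q S v x ≤ Ud u S v x ^ 4 := by
            unfold Lr Ud
            rw [← Finset.prod_pow]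
            refine Finset.prod_le_prod (fun e _ => rat_nonneg hp hp1 hpq hq _) fun e _ => ?_
            unfold rat
            split_ifs
            · rw [huρ]
            · rw [one_pow, div_le_one (by linarith)]; linarith
        _ ≤ τ ^ 4 := by gcongr
    · rw [mul_zero]; positivity
  refine (Ex_mono (PS_prob hp hp1 hpq hq S) h).trans ?_
  rw [Ex_smul, Ex_Lr hp hp1, mul_one]

lemma Ex_Xt_lower {p q u τ : ℝ} (hp : 0 < p) (hp1 : p < 1) (hpq : p ≤ q) (hq : q < 1)
    (hu : 0 ≤ u) (hτ : 0 < τ)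
    (S : Finset (Fin n)) (v : Fin n) :
    1 - Real.exp (2 * (n * q) * u ^ 3) / τ ^ 3 ≤ Ex (PS p q S) (Xt p q u τ S v) := by
  have h : ∀ x, Lr p q S v x - (1 / τ ^ 3) * (Lr p q S v x * Ud u S v x ^ 3) ≤ Xt p q u τ S v x := by
    intro x
    have hL := Lr_nonneg hp hp1 hpq hq S v x
    have hU0 : 0 ≤ Ud u S v x := Finset.prod_nonneg fun e _ => by split_ifs <;> linarith
    unfold Xt
    split_ifs with hx
    · have : 0 ≤ (1 / τ ^ 3) * (Lr p q S v x * Ud u S v x ^ 3) := by positivity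
      linarith
    · push Not at hx
      have h3 : τ ^ 3 ≤ Ud u S v x ^ 3 := by gcongr
      have : Lr p q S v x * τ ^ 3 ≤ Lr p q S v x * Ud u S v x ^ 3 := by gcongr
      rw [sub_nonpos, one_div, ← div_eq_inv_mul, le_div_iff₀ (by positivity)]
      exact this
  refine le_trans ?_ (Ex_mono (PS_prob hp hp1 hpq hq S) h)
  rw [Ex_sub, Ex_smul, Ex_Lr hp hp1]
  have e1 : Ex (PS p q S) (fun x => Lr p q S v x * Ud u S v x ^ 3) ≤ Real.exp (2 * (n * q) * u ^ 3) := by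
    have := Ex_prod_mem (PS p q S) (Cr S v) (fun _ b => rat p q b * (if b then u else 1) ^ 3)
    unfold Lr Ud
    simp only [← Finset.prod_pow, ← Finset.prod_mul_distrib]
    rw [this]
    have hq0 : 0 < q := by linarith
    calc _ ≤ ∏ e ∈ Cr S v, Real.exp (q * u ^ 3) := by
          have e2 : p * (q / p * u ^ 3) + (1 - p) * ((1 - q) / (1 - p)) = q * u ^ 3 + (1 - q) := by
            have : 0 < 1 - p := by linarith
            field_simp
          refine Finset.prod_le_prod (fun e he => ?_) fun e he => ?_
          · rw [PS_Cr he]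
            simp only [rat, if_true, Bool.false_eq_true, if_false, one_pow, mul_one]
            rw [e2]
            have : 0 ≤ q * u ^ 3 := by positivity
            linarith
          · rw [PS_Cr he]
            simp only [rat, if_true, Bool.false_eq_true, if_false, one_pow, mul_one]
            rw [e2]
            linarith [Real.add_one_le_exp (q * u ^ 3)]
      _ = Real.exp ((Cr S v).card * (q * u ^ 3)) := by
          rw [Finset.prod_const, ← Real.exp_nat_mul]
      _ ≤ _ := by
          apply Real.exp_le_exp.2
          have : ((Cr S v).card : ℝ) ≤ 2 * n := by exact_mod_cast card_Cr S v
          have h0 : 0 ≤ q * u ^ 3 := by positivity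
          nlinarith
  have : 1 / τ ^ 3 * Ex (PS p q S) (fun x => Lr p q S v x * Ud u S v x ^ 3) ≤
     1 / τ ^ 3 * Real.exp (2 * (n * q) * u ^ 3) := by gcongr
  rw [one_div, ← div_eq_inv_mul, ← div_eq_inv_mul] at this
  rw [one_div, ← div_eq_inv_mul]
  linarith

/-- both shared entries vanish -/
lemma Ex_pair {p q : ℝ} (hp : 0 < p) (hp1 : p < 1) (hpq : p ≤ q) (hq : q < 1)
    (S : Finset (Fin n)) (v w : Fin n) (hv : v ∉ S) (hw : w ∉ S) (hvw : v ≠ w) 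
    (f f' : Fin n × Fin n) (hff : (f = (v, w) ∧ f' = (w, v)) ∨ (f = (w, v) ∧ f' = (v, w))) :
    Ex (PS p q S) (fun x => Lr p q S v x * Lr p q S w x * (if x f then 1 else 0)) ≤
      p * (q / p) ^ 2 * (1 + p * (q / p) ^ 2) := by
  have hne : f ≠ f' := by
    rcases hff with ⟨rfl, rfl⟩ | ⟨rfl, rfl⟩ <;> simp [hvw, hvw.symm]
  have hq0 : 0 < q := by linarith
  have hfv : f ∈ Cr S v := by rcases hff with ⟨rfl, rfl⟩ | ⟨rfl, rfl⟩ <;> simp [Cr, hv, hw]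
  have hfw : f ∈ Cr S w := by rcases hff with ⟨rfl, rfl⟩ | ⟨rfl, rfl⟩ <;> simp [Cr, hv, hw]
  have hfv' : f' ∈ Cr S v := by rcases hff with ⟨rfl, rfl⟩ | ⟨rfl, rfl⟩ <;> simp [Cr, hv, hw]
  have hfw' : f' ∈ Cr S w := by rcases hff with ⟨rfl, rfl⟩ | ⟨rfl, rfl⟩ <;> simp [Cr, hv, hw]
  have hint : ∀ e, e ∈ Cr S v → e ∈ Cr S w → e = f ∨ e = f' := by
    rintro ⟨a, b⟩ h1 h2
    simp only [Cr, Finset.mem_filter, Finset.mem_univ, true_and] at h1 h2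
    rcases hff with ⟨rfl, rfl⟩ | ⟨rfl, rfl⟩ <;> simp only [Prod.mk.injEq] <;> grind
  have key := Ex_prod (PS p q S) (fun e b => (if e ∈ Cr S v then rat p q b else 1) *
    (if e ∈ Cr S w then rat p q b else 1) * (if e = f then (if b then 1 else 0) else 1))
  have e1 : (fun x : Fin n × Fin n → Bool => Lr p q S v x * Lr p q S w x * (if x f then (1:ℝ) else 0)) =
    (fun x => ∏ e, (if e ∈ Cr S v then rat p q (x e) else 1) *
    (if e ∈ Cr S w then rat p q (x e) else 1) * (if e = f then (if x e then 1 else 0) else 1)) := by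
    funext x
    rw [Finset.prod_mul_distrib, Finset.prod_mul_distrib, Finset.prod_ite_mem, Finset.prod_ite_mem,
      Finset.univ_inter, Finset.univ_inter, Finset.prod_ite_eq' ]
    simp [Lr]
  rw [e1, key]
  calc _ ≤ ∏ e, ((if e = f then p * (q / p) ^ 2 else 1) * (if e = f' then 1 + p * (q / p) ^ 2 else 1)) := by
        have hr := rat_nonneg hp hp1 hpq hq
        have hm := rat_mean (q := q) hp hp1
        have hrf : rat p q false ≤ 1 := by
          simp only [rat, Bool.false_eq_true, if_false]
          rw [div_le_one (by linarith)]; linarith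
        refine Finset.prod_le_prod (fun e _ => ?_) fun e _ => ?_
        · have h1 := (PS_prob hp hp1 hpq hq S e).1
          have h2 : 0 ≤ 1 - PS p q S e := by linarith [(PS_prob hp hp1 hpq hq S e).2]
          have h3 := hr true
          have h4 := hr false
          refine add_nonneg (mul_nonneg h1 ?_) (mul_nonneg h2 ?_) <;>
          · refine mul_nonneg (mul_nonneg ?_ ?_) ?_ <;> split_ifs <;> simp_all
        · by_cases h1 : e = f
          · have h2 : e ≠ f' := h1 ▸ hne
            subst h1
            simp only [hfv, hfw, h2, if_true, if_false, PS_Cr hfv]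
            simp [rat, sq]
          · by_cases h2 : e = f'
            · subst h2
              simp only [hfv', hfw', h1, if_true, if_false, PS_Cr hfv', mul_one, one_mul]
              have h5 : rat p q true = q / p := by simp [rat]
              have : rat p q false * rat p q false ≤ 1 := mul_le_one₀ hrf (hr _) hrf
              rw [h5]
              nlinarith
            · have h3 : ¬ (e ∈ Cr S v ∧ e ∈ Cr S w) := fun h => by
                rcases hint e h.1 h.2 with h | h <;> contradiction
              simp only [h1, h2, if_false, mul_one]
              by_cases h4 : e ∈ Cr S v
              · have h5 : e ∉ Cr S w := fun h => h3 ⟨h4, h⟩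
                simp only [h4, h5, if_true, if_false, mul_one, PS_Cr h4, hm, le_refl]
              · by_cases h5 : e ∈ Cr S w
                · simp only [h4, h5, if_true, if_false, one_mul, PS_Cr h5, hm, le_refl]
                · simp [h4, h5]
    _ = _ := by
        rw [Finset.prod_mul_distrib, Finset.prod_ite_eq', Finset.prod_ite_eq']
        simp

lemma Ex_cov {p q u τ : ℝ} (hp : 0 < p) (hp1 : p ≤ 1 / 4) (hpq : p ≤ q) (hq : q < 1)
    (S : Finset (Fin n)) (v w : Fin n) (hv : v ∉ S) (hw : w ∉ S) (hvw : v ≠ w) :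
    Ex (PS p q S) (fun x => Xt p q u τ S v x * Xt p q u τ S w x) ≤
      Ex (PS p q S) (Xt p q u τ S v) * Ex (PS p q S) (Xt p q u τ S w) +
      (4 * p + 2 * (p * (q / p) ^ 2 * (1 + p * (q / p) ^ 2))) := by
  have hp1' : p < 1 := by linarith
  have hP := PS_prob hp hp1' hpq hq S
  set P := PS p q S with hPdef
  let sh : Finset (Fin n × Fin n) := {(v, w), (w, v)}
  let N : (Fin n × Fin n → Bool) → ℝ := fun x => ∏ e ∈ sh, (if x e then 0 else 1)
  let z : (Fin n × Fin n → Bool) → (Fin n × Fin n → Bool) := fun x e => if e ∈ sh then false else x e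
  let Y : Fin n → (Fin n × Fin n → Bool) → ℝ := fun a x => Xt p q u τ S a (z x)
  have hshv : ∀ e ∈ sh, e ∈ Cr S v ∧ e ∈ Cr S w := by
    intro e he
    simp only [sh, Finset.mem_insert, Finset.mem_singleton] at he
    rcases he with rfl | rfl <;> simp [Cr, hv, hw]
  have hint : ∀ e, e ∈ Cr S v → e ∈ Cr S w → e ∈ sh := by
    rintro ⟨a, b⟩ h1 h2
    simp only [Cr, Finset.mem_filter, Finset.mem_univ, true_and] at h1 h2
    simp only [sh, Finset.mem_insert, Finset.mem_singleton, Prod.mk.injEq]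
    grind
  have hXdep : ∀ a x y, (∀ e ∈ Cr S a, x e = y e) → Xt p q u τ S a x = Xt p q u τ S a y := by
    intro a x y h
    have h1 : Ud u S a x = Ud u S a y := Finset.prod_congr rfl fun e he => by rw [h e he]
    have h2 : Lr p q S a x = Lr p q S a y := Finset.prod_congr rfl fun e he => by rw [h e he]
    simp only [Xt, h1, h2]
  have hYdep : ∀ a x y, (∀ e ∈ Cr S a, e ∉ sh → x e = y e) → Y a x = Y a y := by
    intro a x y h
    refine hXdep a _ _ fun e he => ?_
    simp only [z]
    split_ifs with h1
    · rfl
    · exact h e he h1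
  have hN01 : ∀ x, (N x = 1 ∧ z x = x) ∨ (N x = 0 ∧ (x (v, w) = true ∨ x (w, v) = true)) := by
    intro x
    by_cases h : x (v, w) = true ∨ x (w, v) = true
    · right
      refine ⟨?_, h⟩
      rcases h with h | h
      · exact Finset.prod_eq_zero (i := (v, w)) (by simp [sh]) (by simp [h])
      · exact Finset.prod_eq_zero (i := (w, v)) (by simp [sh]) (by simp [h])
    · left
      push Not at h
      have h' : ∀ e ∈ sh, x e = false := by
        intro e he
        simp only [sh, Finset.mem_insert, Finset.mem_singleton] at he
        rcases he with rfl | rfl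
        · simpa using h.1
        · simpa using h.2
      refine ⟨Finset.prod_eq_one fun e he => by simp [h' e he], ?_⟩
      funext e
      simp only [z]
      split_ifs with h1
      · exact (h' e h1).symm
      · rfl
  have hX0 := fun a x => Xt_nonneg (u := u) (τ := τ) hp hp1' hpq hq S a x
  have hXL := fun a x => Xt_le (u := u) (τ := τ) hp hp1' hpq hq S a x
  have hL0 := fun a x => Lr_nonneg hp hp1' hpq hq S a x
  have hEN : Ex P N = (1 - p) ^ 2 := by
    have := Ex_prod_mem P sh (fun _ b => if b then 0 else 1)
    simp only [N]
    rw [this]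
    have h2 : ∀ e ∈ sh, P e * (if true = true then 0 else 1) + (1 - P e) * (if false = true then 0 else 1) = 1 - p := by
      intro e he
      rw [hPdef, PS_Cr (hshv e he).1]; simp
    rw [Finset.prod_congr rfl h2, Finset.prod_const]
    congr 1
    simp only [sh]
    rw [Finset.card_pair]
    simp [hvw]
  have hNdep : ∀ x y, (∀ e ∈ sh, x e = y e) → N x = N y := fun x y h =>
    Finset.prod_congr rfl fun e he => by rw [h e he]
  have hYE : ∀ a, (1 - p) ^ 2 * Ex P (Y a) ≤ Ex P (Xt p q u τ S a) := by
    intro a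
    rw [← hEN, ← Ex_indep P sh N (Y a) hNdep (fun x y h => hYdep a x y fun e _ he => h e he)]
    refine Ex_mono hP fun x => ?_
    rcases hN01 x with ⟨h1, h2⟩ | ⟨h1, h2⟩
    · simp only [Y]; rw [h1, h2, one_mul]
    · rw [h1, zero_mul]; exact hX0 a x
  have hb : ∀ x, Xt p q u τ S v x * Xt p q u τ S w x ≤ N x * (Y v x * Y w x) +
      (Lr p q S v x * Lr p q S w x * (if x (v, w) then 1 else 0) +
       Lr p q S v x * Lr p q S w x * (if x (w, v) then 1 else 0)) := by
    intro x
    have hLL := mul_nonneg (hL0 v x) (hL0 w x)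
    have hXX : Xt p q u τ S v x * Xt p q u τ S w x ≤ Lr p q S v x * Lr p q S w x :=
      mul_le_mul (hXL v x) (hXL w x) (hX0 w x) (hL0 v x)
    rcases hN01 x with ⟨h1, h2⟩ | ⟨h1, h2⟩
    · simp only [Y]; rw [h1, h2, one_mul]
      split_ifs <;> linarith
    · rw [h1, zero_mul, zero_add]
      split_ifs <;> simp_all <;> linarith
  refine (Ex_mono hP hb).trans ?_
  rw [Ex_add, Ex_add]
  have hp1s := Ex_pair hp hp1' hpq hq S v w hv hw hvw (v, w) (w, v) (Or.inl ⟨rfl, rfl⟩)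
  have hp2s := Ex_pair hp hp1' hpq hq S v w hv hw hvw (w, v) (v, w) (Or.inr ⟨rfl, rfl⟩)
  have hI1 : Ex P (fun x => N x * (Y v x * Y w x)) = (1 - p) ^ 2 * (Ex P (Y v) * Ex P (Y w)) := by
    rw [Ex_indep P sh N (fun x => Y v x * Y w x) hNdep, hEN,
      Ex_indep P (Cr S v \ sh) (Y v) (Y w)]
    · intro x y h
      exact hYdep v x y fun e he h1 => h e (Finset.mem_sdiff.2 ⟨he, h1⟩)
    · intro x y h
      refine hYdep w x y fun e he h1 => h e fun h2 => h1 ?_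
      exact hint e (Finset.mem_sdiff.1 h2).1 he
    · intro x y h
      show Y v x * Y w x = Y v y * Y w y
      rw [hYdep v x y fun e _ he => h e he, hYdep w x y fun e _ he => h e he]
  have hfin : (1 - p) ^ 2 * (Ex P (Y v) * Ex P (Y w)) ≤
      Ex P (Xt p q u τ S v) * Ex P (Xt p q u τ S w) + 4 * p := by
    have hXle : ∀ a, Ex P (Xt p q u τ S a) ≤ 1 := fun a =>
      (Ex_mono hP (hXL a)).trans (Ex_Lr hp hp1' S a).le
    have hXge : ∀ a, 0 ≤ Ex P (Xt p q u τ S a) := fun a => by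
      rw [← Ex_const P 0]; exact Ex_mono hP (hX0 a)
    have hYge : ∀ a, 0 ≤ Ex P (Y a) := fun a => by
      rw [← Ex_const P 0]; exact Ex_mono hP fun x => hX0 a _
    have hc : 1 ≤ (1 + 4 * p) * (1 - p) ^ 2 := by nlinarith [mul_pos hp hp, mul_pos (mul_pos hp hp) hp]
    have hv1 := hYE v
    have hw1 := hYE w
    have A : (1 - p) ^ 2 * Ex P (Y v) * ((1 - p) ^ 2 * Ex P (Y w)) ≤
      Ex P (Xt p q u τ S v) * Ex P (Xt p q u τ S w) :=
      mul_le_mul hv1 hw1 (mul_nonneg (sq_nonneg _) (hYge w)) (hXge v)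
    have B : Ex P (Xt p q u τ S v) * Ex P (Xt p q u τ S w) ≤ 1 := mul_le_one₀ (hXle v) (hXge w) (hXle w)
    have Cn : 0 ≤ (1 - p) ^ 2 * (Ex P (Y v) * Ex P (Y w)) :=
      mul_nonneg (sq_nonneg _) (mul_nonneg (hYge v) (hYge w))
    set t := (1 - p) ^ 2 * (Ex P (Y v) * Ex P (Y w)) with ht
    have A' : (1 - p) ^ 2 * t ≤ Ex P (Xt p q u τ S v) * Ex P (Xt p q u τ S w) := by
      rw [ht]; linarith
    calc t ≤ (1 + 4 * p) * (1 - p) ^ 2 * t := by nlinarith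
      _ = (1 + 4 * p) * ((1 - p) ^ 2 * t) := by ring
      _ ≤ (1 + 4 * p) * (Ex P (Xt p q u τ S v) * Ex P (Xt p q u τ S w)) := by gcongr
      _ ≤ _ := by nlinarith
  rw [hI1]
  linarith

/-- One step of the hybrid argument for a fixed special set. -/
lemma one_step {p q u τ a : ℝ} (hp : 0 < p) (hp1 : p ≤ 1 / 4) (hpq : p ≤ q) (hq : q < 1)
    (hu : 0 ≤ u) (huρ : u ^ 4 = q / p) (hτ : 0 < τ) (ha : 0 ≤ a)
    (S : Finset (Fin n)) (F : (Fin n × Fin n → Bool) → ℝ) (hF : ∀ x, 0 ≤ F x ∧ F x ≤ 1)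
    (hκ : (Sᶜ.card : ℝ) * τ ^ 4 + (Sᶜ.card : ℝ) ^ 2 * (4 * p + 2 * (p * (q / p) ^ 2 * (1 + p * (q / p) ^ 2)))
      ≤ ((Sᶜ.card : ℝ) * a) ^ 2) :
    |∑ v ∈ Sᶜ, (Ex (PS p q (insert v S)) F - Ex (PS p q S) F)| ≤
      Sᶜ.card * (2 * (Real.exp (2 * (n * q) * u ^ 3) / τ ^ 3) + a) := by
  have hp1' : p < 1 := by linarith
  have := second_moment (PS p q S) (PS_prob hp hp1' hpq hq S) Sᶜ (Lr p q S) (Xt p q u τ S) F hF ha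
    (by positivity)
    (fun v _ x => Xt_le hp hp1' hpq hq S v x) (fun v _ => Ex_Lr hp hp1' S v)
    (fun v _ => Ex_Xt_lower hp hp1' hpq hq hu hτ S v)
    (fun v _ => Ex_Xt_sq hp hp1' hpq hq hu huρ hτ.le S v)
    (fun v hv w hw hvw => Ex_cov hp hp1 hpq hq S v w (Finset.mem_compl.1 hv) (Finset.mem_compl.1 hw) hvw)
    hκ
  convert this using 2
  refine Finset.sum_congr rfl fun v hv => ?_
  rw [Ex_insert hp hp1' S v (Finset.mem_compl.1 hv)]

end Core
lemma asymp (d : ℝ) (hd : 0 < d) : ∃ N : ℕ, ∀ n : ℕ, N ≤ n → 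
   0 < n ∧ 2 * (Real.log n)^2 ≤ n ∧ d / n ≤ 1/4 ∧ d ≤ Real.sqrt (Real.log n) ∧ Real.sqrt (Real.log n) / n < 1 ∧ 
   (Real.log n)^2 * (2 * (Real.exp (2 * Real.sqrt (Real.log n) * ((Real.sqrt (Real.log n) / d)^(1/4:ℝ))^3) / ((n:ℝ)^(1/10:ℝ))^3)
     + 2 * (n:ℝ)^(-(3/10):ℝ)) ≤ (n:ℝ)^(-(1/4):ℝ) ∧
   ∀ m : ℝ, n ≤ 2 * m → m * ((n:ℝ)^(1/10:ℝ))^4 + m^2 * (4 * (d/n) + 2 * (d/n * (Real.sqrt (Real.log n) / d)^2 * (1 + d/n * (Real.sqrt (Real.log n) / d)^2))) ≤ (m * (2 * (n:ℝ)^(-(3/10):ℝ)))^2 := by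
  have key : ∀ᶠ x : ℝ in Filter.atTop, 0 < x ∧ 2 * x^2 ≤ Real.exp x ∧ 4 * d ≤ Real.exp x ∧ d^2 ≤ x ∧ 4 * x^2 ≤ Real.exp ((1/25) * x) ∧ 4 * d + 4 * x / d ≤ Real.exp ((2/5) * x) ∧ x / d ≤ Real.exp x ∧ 
     2 * Real.sqrt x * ((Real.sqrt x / d)^(1/4:ℝ))^3 ≤ (1/100) * x := by
    have hl : ∀ (c k : ℝ), 0 < c → (fun x : ℝ => x ^ k) =o[Filter.atTop] fun x => Real.exp (c * x) :=
      fun c k hc => isLittleO_rpow_exp_pos_mul_atTop k hc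
    have e1 := (hl 1 2 one_pos).def (c := 1/2) (by norm_num)
    have e2 := (hl (1/25) 2 (by norm_num)).def (c := 1/4) (by norm_num)
    have e3 := (hl (2/5) 1 (by norm_num)).def (c := 1/(8/d)) (by positivity)
    have e4 := (hl 1 1 one_pos).def (c := d) hd
    have e5 : ∀ᶠ x : ℝ in Filter.atTop, 8 * d ≤ Real.exp ((2/5) * x) :=
      (Real.tendsto_exp_atTop.comp (Filter.tendsto_id.const_mul_atTop (by norm_num : (0:ℝ) < 2/5))).eventually_ge_atTop _
    have e6 : ∀ᶠ x : ℝ in Filter.atTop, 4 * d ≤ Real.exp x := Real.tendsto_exp_atTop.eventually_ge_atTop _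
    have e7 : ∀ᶠ x : ℝ in Filter.atTop, 200 / d ^ (3/4:ℝ) ≤ x ^ (1/8:ℝ) :=
      (tendsto_rpow_atTop (by norm_num)).eventually_ge_atTop _
    filter_upwards [e1, e2, e3, e4, e5, e6, e7, Filter.eventually_gt_atTop 0, Filter.eventually_ge_atTop (d^2)] with x h1 h2 h3 h4 h5 h6 h7 hx hdx
    simp only [Real.norm_eq_abs, Real.abs_exp, one_mul, Real.rpow_two, Real.rpow_one, abs_of_pos hx, abs_of_pos (pow_pos hx 2)] at h1 h2 h3 h4
    refine ⟨hx, by linarith, h6, hdx, by linarith, ?_, ?_, ?_⟩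
    · have : 4 * x / d ≤ Real.exp (2/5*x) / 2 := by
        rw [one_div_div] at h3
        rw [div_le_iff₀ hd]; linarith
      linarith
    · rw [div_le_iff₀ hd]; linarith
    · have hd4 : 0 < d ^ (3/4:ℝ) := by positivity
      have : ((Real.sqrt x / d)^(1/4:ℝ))^3 = x ^ (3/8:ℝ) / d ^ (3/4:ℝ) := by
        rw [← Real.rpow_natCast, ← Real.rpow_mul (by positivity), Real.div_rpow (by positivity) hd.le,
          Real.sqrt_eq_rpow, ← Real.rpow_mul hx.le]
        norm_num
      rw [this, Real.sqrt_eq_rpow]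
      rw [div_le_iff₀ hd4] at h7
      have hxx : x = x ^ (1/2:ℝ) * x ^ (3/8:ℝ) * x ^ (1/8:ℝ) := by
        rw [← Real.rpow_add hx, ← Real.rpow_add hx]; norm_num
      rw [mul_div_assoc', div_le_iff₀ hd4]
      have hp : 0 < x ^ (1/2:ℝ) * x ^ (3/8:ℝ) := by positivity
      calc _ = (x ^ (1/2:ℝ) * x ^ (3/8:ℝ)) * (1/100) * 200 := by ring
        _ ≤ (x ^ (1/2:ℝ) * x ^ (3/8:ℝ)) * (1/100) * (x ^ (1/8:ℝ) * d ^ (3/4:ℝ)) := by gcongr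
        _ = 1/100 * (x ^ (1/2:ℝ) * x ^ (3/8:ℝ) * x ^ (1/8:ℝ)) * d ^ (3/4:ℝ) := by ring
        _ = _ := by rw [← hxx]
  have := ((Real.tendsto_log_atTop.comp tendsto_natCast_atTop_atTop).eventually key).and (Filter.eventually_gt_atTop 0)
  obtain ⟨N, hN⟩ := Filter.eventually_atTop.1 this
  refine ⟨N, fun n hn => ?_⟩
  obtain ⟨⟨hx, h1, h2, h3, h4, h5, h6, h7⟩, hn0⟩ := hN n hn
  simp only [Function.comp_apply] at *
  have hnR : (0:ℝ) < n := by exact_mod_cast hn0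
  have hr : ∀ y : ℝ, (n:ℝ)^y = Real.exp (y * Real.log n) := fun y => by
    rw [Real.rpow_def_of_pos hnR, mul_comm]
  have hpw : ∀ y : ℝ, ∀ k : ℕ, ((n:ℝ)^y)^k = Real.exp (k * y * Real.log n) := fun y k => by
    rw [hr, ← Real.exp_nat_mul, mul_assoc]
  have hne : (n:ℝ) = Real.exp (Real.log n) := (Real.exp_log hnR).symm
  rw [hpw, hr, hr]
  simp only [hpw]
  have hsq := Real.sq_sqrt hx.le
  generalize Real.log n = x at *
  rw [hne]
  have hE := Real.exp_pos x
  refine ⟨hn0, h1, ?_, ?_, ?_, ?_, ?_⟩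
  · rw [div_le_iff₀ hE]; linarith
  · exact Real.le_sqrt_of_sq_le h3
  · rw [div_lt_one hE]
    have := Real.add_one_le_exp x
    nlinarith [Real.sqrt_nonneg x]
  · set y := 2 * Real.sqrt x * ((Real.sqrt x / d)^(1/4:ℝ))^3
    rw [← Real.exp_sub]
    have a1 : Real.exp (y - ((3:ℕ):ℝ) * (1/10) * x) ≤ Real.exp (-(1/25) * x) * Real.exp (-(1/4)*x) := by
      rw [← Real.exp_add]; apply Real.exp_le_exp.2; push_cast; linarith
    have a2 : Real.exp (-(3/10) * x) ≤ Real.exp (-(1/25) * x) * Real.exp (-(1/4)*x) := by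
      rw [← Real.exp_add]; apply Real.exp_le_exp.2; linarith
    have a3 : Real.exp (1/25*x) * Real.exp (-(1/25)*x) = 1 := by
      rw [← Real.exp_add]; simp
    calc _ ≤ x^2 * (2 * (Real.exp (-(1/25) * x) * Real.exp (-(1/4)*x)) + 2 * (Real.exp (-(1/25) * x) * Real.exp (-(1/4)*x))) := by gcongr
      _ = 4 * x^2 * Real.exp (-(1/25) * x) * Real.exp (-(1/4)*x) := by ring
      _ ≤ Real.exp (1/25*x) * Real.exp (-(1/25) * x) * Real.exp (-(1/4)*x) := by gcongr
      _ = _ := by rw [a3, one_mul]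
  · intro m hm
    have b1 : d / Real.exp x * (Real.sqrt x / d)^2 = x / d / Real.exp x := by
      rw [div_pow, hsq]; field_simp
    rw [b1]
    have b2 : x / d / Real.exp x ≤ 1 := by rw [div_le_one hE]; exact h6
    have b3 : 0 ≤ x / d / Real.exp x := by positivity
    have hm0 : 0 < m := by linarith
    have b4 : 4 * (d / Real.exp x) + 2 * (x / d / Real.exp x * (1 + x / d / Real.exp x)) ≤ Real.exp (-(3/5)*x) := by
      calc _ ≤ 4 * (d / Real.exp x) + 2 * (x / d / Real.exp x * (1 + 1)) := by gcongr
        _ = (4 * d + 4 * x / d) / Real.exp x := by ring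
        _ ≤ Real.exp (2/5*x) / Real.exp x := by gcongr
        _ = _ := by rw [← Real.exp_sub]; ring_nf
    have b5 : m * Real.exp (((4:ℕ):ℝ) * (1/10) * x) ≤ m^2 * (2 * Real.exp (-(3/5)*x)) := by
      have : Real.exp (((4:ℕ):ℝ) * (1/10) * x) = Real.exp x * Real.exp (-(3/5)*x) := by
        rw [← Real.exp_add]; push_cast; ring_nf
      rw [this]
      have : 0 < m * Real.exp (-(3/5)*x) := by positivity
      nlinarith
    have b6 : Real.exp (-(3/10)*x)^2 = Real.exp (-(3/5)*x) := by
      rw [← Real.exp_nat_mul]; push_cast; ring_nf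
    have b7 := mul_le_mul_of_nonneg_left b4 (sq_nonneg m)
    have b8 : 0 < m^2 * Real.exp (-(3/5)*x) := by positivity
    rw [mul_pow, mul_pow, b6]
    linarith

section Hybrid
variable {n : ℕ}

/-- top `k` labels -/
def Sk (k : ℕ) (σ : Equiv.Perm (Fin n)) : Finset (Fin n) :=
  Finset.univ.filter fun i => n - k ≤ (σ.symm i : ℕ)

lemma Sk_compl (k : ℕ) (σ : Equiv.Perm (Fin n)) :
    (Sk k σ)ᶜ = (Finset.univ.filter fun r : Fin n => (r : ℕ) < n - k).map σ.toEmbedding := by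
  ext i
  simp only [Sk, Finset.mem_compl, Finset.mem_filter, Finset.mem_univ, true_and, not_le,
    Finset.mem_map_equiv]

lemma Sk_compl_card (k : ℕ) (σ : Equiv.Perm (Fin n)) : (Sk k σ)ᶜ.card = n - k := by
  rw [Sk_compl, Finset.card_map]
  rw [Fin.card_filter_val_lt]
  omega

lemma Sk_swap (k : ℕ) (hk : k < n) (σ : Equiv.Perm (Fin n)) (r : Fin n) (hr : (r : ℕ) < n - k) :
    Sk (k + 1) (σ * Equiv.swap r ⟨n - k - 1, by omega⟩) = insert (σ r) (Sk k σ) := by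
  ext i
  obtain ⟨a, rfl⟩ := σ.surjective i
  have : (σ * Equiv.swap r ⟨n - k - 1, by omega⟩).symm (σ a) = Equiv.swap r ⟨n - k - 1, by omega⟩ a := by
    rw [Equiv.symm_apply_eq]; simp
  simp only [Sk, Finset.mem_insert, Finset.mem_filter, Finset.mem_univ, true_and, this,
    Equiv.symm_apply_apply, EmbeddingLike.apply_eq_iff_eq]
  rw [Equiv.swap_apply_def]
  split_ifs with h1 h2
  · simp [h1]; omega
  · subst h2; simp only [Fin.ext_iff] at *; omega
  · simp only [Fin.ext_iff] at *; omega

lemma hybrid_step (k : ℕ) (hk : k < n) (f : Finset (Fin n) → ℝ) (ε : ℝ)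
    (hf : ∀ σ : Equiv.Perm (Fin n), |∑ v ∈ (Sk k σ)ᶜ, (f (insert v (Sk k σ)) - f (Sk k σ))| ≤
      (Sk k σ)ᶜ.card * ε) :
    |∑ σ : Equiv.Perm (Fin n), f (Sk (k + 1) σ) - ∑ σ : Equiv.Perm (Fin n), f (Sk k σ)| ≤
      Fintype.card (Equiv.Perm (Fin n)) * ε := by
  set R := Finset.univ.filter fun r : Fin n => (r : ℕ) < n - k with hR
  have hRc : R.card = n - k := by rw [hR, Fin.card_filter_val_lt]; omega
  have h1 : ∀ r ∈ R, ∑ σ : Equiv.Perm (Fin n), f (Sk (k + 1) σ) =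
      ∑ σ : Equiv.Perm (Fin n), f (insert (σ r) (Sk k σ)) := by
    intro r hr
    rw [← Equiv.sum_comp (Equiv.mulRight (Equiv.swap r ⟨n - k - 1, by omega⟩))]
    refine Finset.sum_congr rfl fun σ _ => ?_
    rw [Equiv.coe_mulRight, Sk_swap k hk σ r (by simpa [hR] using hr)]
  have hpos : (0 : ℝ) < ((n - k : ℕ) : ℝ) := by exact_mod_cast (by omega : 0 < n - k)
  have h2 : ((n - k : ℕ) : ℝ) * (∑ σ : Equiv.Perm (Fin n), f (Sk (k + 1) σ) - ∑ σ : Equiv.Perm (Fin n), f (Sk k σ))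
      = ∑ σ : Equiv.Perm (Fin n), ∑ v ∈ (Sk k σ)ᶜ, (f (insert v (Sk k σ)) - f (Sk k σ)) := by
    have e1 : ∀ σ : Equiv.Perm (Fin n), ∑ v ∈ (Sk k σ)ᶜ, (f (insert v (Sk k σ)) - f (Sk k σ)) =
        ∑ r ∈ R, (f (insert (σ r) (Sk k σ)) - f (Sk k σ)) := by
      intro σ
      rw [Sk_compl, Finset.sum_map]; rfl
    simp only [e1]
    rw [Finset.sum_comm, ← hRc, ← nsmul_eq_mul, ← Finset.sum_const]
    refine Finset.sum_congr rfl fun r hr => ?_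
    rw [h1 r hr, Finset.sum_sub_distrib]
  have h3 : ((n - k : ℕ) : ℝ) * |∑ σ : Equiv.Perm (Fin n), f (Sk (k + 1) σ) - ∑ σ : Equiv.Perm (Fin n), f (Sk k σ)|
      ≤ ((n - k : ℕ) : ℝ) * (Fintype.card (Equiv.Perm (Fin n)) * ε) := by
    rw [← abs_of_pos hpos, ← abs_mul, h2, abs_of_pos hpos]
    refine (Finset.abs_sum_le_sum_abs _ _).trans ?_
    refine (Finset.sum_le_card_nsmul _ _ (((n - k : ℕ) : ℝ) * ε) fun σ _ => ?_).trans ?_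
    · have := hf σ
      rwa [Sk_compl_card] at this
    · rw [nsmul_eq_mul, Finset.card_univ]; exact le_of_eq (by ring)
  exact le_of_mul_le_mul_left h3 hpos

lemma hybrid (ℓ : ℕ) (hℓ : ℓ ≤ n) (f : Finset (Fin n) → ℝ) (ε : ℝ)
    (hf : ∀ k < ℓ, ∀ σ : Equiv.Perm (Fin n), |∑ v ∈ (Sk k σ)ᶜ, (f (insert v (Sk k σ)) - f (Sk k σ))| ≤
      (Sk k σ)ᶜ.card * ε) :
    |∑ σ : Equiv.Perm (Fin n), f (Sk ℓ σ) - ∑ σ : Equiv.Perm (Fin n), f (Sk 0 σ)| ≤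
      ℓ * (Fintype.card (Equiv.Perm (Fin n)) * ε) := by
  induction ℓ with
  | zero => simp
  | succ k ih =>
    have h1 := ih (by omega) fun j hj => hf j (by omega)
    have h2 := hybrid_step k (by omega) f ε (hf k (by omega))
    push_cast
    calc _ ≤ _ := abs_sub_le _ (∑ σ : Equiv.Perm (Fin n), f (Sk k σ)) _
      _ ≤ _ := add_le_add h2 h1
      _ = _ := by ring

lemma Sk_zero (σ : Equiv.Perm (Fin n)) : Sk 0 σ = ∅ := by
  ext i; simp [Sk]

end Hybrid

section Transfer

lemma pi_atomic {ι α : Type*} [Fintype ι] [DecidableEq ι] [Fintype α] {β : ι → Type*} [∀ i, MeasurableSpace (β i)]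
    (c : ι → α → ENNReal) (hc : ∀ i a, c i a ≠ ⊤) (f : ∀ i, α → β i) :
    Measure.pi (fun i => ∑ a, c i a • Measure.dirac (f i a)) =
      ∑ x : ι → α, (∏ i, c i (x i)) • Measure.dirac (fun i => f i (x i)) := by
  have : ∀ i, IsFiniteMeasure (∑ a, c i a • Measure.dirac (f i a)) := by
    intro i
    refine ⟨?_⟩
    simp only [Measure.coe_finsetSum, Finset.sum_apply, Measure.smul_apply, measure_univ, smul_eq_mul, mul_one]
    exact ENNReal.sum_lt_top.2 fun a _ => (hc i a).lt_top
  apply Measure.pi_eq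
  intro s hs
  simp only [Measure.coe_finsetSum, Finset.sum_apply, Measure.smul_apply, smul_eq_mul]
  rw [Finset.prod_univ_sum, Fintype.piFinset_univ]
  refine Finset.sum_congr rfl fun x _ => ?_
  rw [Finset.prod_mul_distrib]
  congr 1
  rw [Measure.dirac_apply' _ (MeasurableSet.univ_pi hs)]
  simp only [Measure.dirac_apply' _ (hs _)]
  by_cases h : ∀ i, f i (x i) ∈ s i
  · rw [Set.indicator_of_mem (by simpa [Set.mem_pi] using h)]
    symm
    exact Finset.prod_eq_one fun i _ => Set.indicator_of_mem (h i) _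
  · rw [Set.indicator_of_notMem (by simpa [Set.mem_pi] using h)]
    push Not at h
    obtain ⟨i, hi⟩ := h
    symm
    exact Finset.prod_eq_zero (Finset.mem_univ i) (Set.indicator_of_notMem hi _)

/-- real value of a bit -/
noncomputable def br (b : Bool) : ℝ := if b then 1 else 0

lemma bernoulliR_eq (p : ℝ) : bernoulliR p =
    ∑ b : Bool, ENNReal.ofReal (if b then p else 1 - p) • Measure.dirac (br b) := by
  simp [bernoulliR, br]

lemma law_eq {n : ℕ} (P : Fin n × Fin n → ℝ) (hP : ∀ e, 0 ≤ P e ∧ P e ≤ 1) :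
    (Measure.pi fun i : Fin n => Measure.pi fun j : Fin n => bernoulliR (P (i, j))) =
      ∑ x : Fin n × Fin n → Bool, ENNReal.ofReal (wt P x) •
        Measure.dirac (fun i j => br (x (i, j))) := by
  have h1 : ∀ i : Fin n, (Measure.pi fun j : Fin n => bernoulliR (P (i, j))) = 
     ∑ x : Fin n → Bool, (∏ j, ENNReal.ofReal (if x j then P (i, j) else 1 - P (i, j))) •
        Measure.dirac (fun j => br (x j)) := by
    intro i
    simp only [bernoulliR_eq]
    exact pi_atomic (fun j b => ENNReal.ofReal (if b then P (i, j) else 1 - P (i, j)))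
      (fun _ _ => ENNReal.ofReal_ne_top) (fun _ b => br b)
  simp only [h1]
  rw [pi_atomic (fun i (x : Fin n → Bool) => ∏ j, ENNReal.ofReal (if x j then P (i, j) else 1 - P (i, j)))
      (fun _ _ => ENNReal.prod_ne_top fun _ _ => ENNReal.ofReal_ne_top) (fun _ x j => br (x j))]
  rw [← Equiv.sum_comp (Equiv.curry (Fin n) (Fin n) Bool)]
  refine Finset.sum_congr rfl fun x _ => ?_
  congr 1
  unfold wt
  rw [ENNReal.ofReal_prod_of_nonneg, Fintype.prod_prod_type]
  · rfl
  · intro e _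
    have := hP e
    split_ifs <;> linarith

lemma atomic_apply {Ω β : Type*} [Fintype Ω] [MeasurableSpace β] [MeasurableSingletonClass β]
    (c : Ω → ℝ) (hc : ∀ x, 0 ≤ c x) (f : Ω → β) (E : Set β) :
    ((∑ x, ENNReal.ofReal (c x) • Measure.dirac (f x)) E).toReal =
      ∑ x, c x * E.indicator (fun _ => (1 : ℝ)) (f x) := by
  simp only [Measure.coe_finsetSum, Finset.sum_apply, Measure.smul_apply, smul_eq_mul]
  rw [ENNReal.toReal_sum]
  · refine Finset.sum_congr rfl fun x _ => ?_
    rw [ENNReal.toReal_mul, ENNReal.toReal_ofReal (hc x), Measure.dirac_apply]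
    by_cases h : f x ∈ E <;> simp [h]
  · intro x _
    refine ENNReal.mul_ne_top ENNReal.ofReal_ne_top ?_
    exact (prob_le_one.trans_lt ENNReal.one_lt_top).ne

lemma conj_apply {n : ℕ} (σ : Equiv.Perm (Fin n)) (y : Fin n → Fin n → ℝ) (i j : Fin n) :
    ((σ.permMatrix ℝ)ᵀ * Matrix.of y * σ.permMatrix ℝ) i j = y (σ.symm i) (σ.symm j) := by
  simp only [Matrix.mul_apply, Matrix.transpose_apply, Equiv.Perm.permMatrix, PEquiv.toMatrix_apply,
    Equiv.toPEquiv_apply, Option.mem_def, Option.some.injEq, Matrix.of_apply]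
  rw [Finset.sum_eq_single (σ.symm j)]
  · rw [Finset.sum_eq_single (σ.symm i)]
    · simp
    · intro b _ hb
      rw [if_neg, zero_mul]
      rintro rfl; simp at hb
    · simp
  · intro b _ hb
    rw [if_neg, mul_zero]
    rintro rfl; simp at hb
  · simp

lemma lawConjB_eq {n : ℕ} (d : ℝ) (p q : ℝ) (hp : p = d / n) (hq : q = Real.sqrt (Real.log n) / n)
    (hp0 : 0 < p) (hp1 : p < 1) (hpq : p ≤ q) (hq1 : q < 1) (E : Set (Fin n → Fin n → ℝ)) :
    (lawConjB n d E).toReal = (Fintype.card (Equiv.Perm (Fin n)) : ℝ)⁻¹ *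
      ∑ σ : Equiv.Perm (Fin n), Ex (PS p q (Sk ⌊(Real.log n) ^ 2⌋₊ σ))
        (fun x => E.indicator (fun _ => (1 : ℝ)) (fun i j => br (x (i, j)))) := by
  set ℓ := ⌊(Real.log n) ^ 2⌋₊ with hℓ
  set P0 : Fin n × Fin n → ℝ := PS p q (Sk ℓ (1 : Equiv.Perm (Fin n))) with hP0
  have hP := PS_prob hp0 hp1 hpq hq1 (Sk ℓ (1 : Equiv.Perm (Fin n)))
  have hB : lawB n d = ∑ x : Fin n × Fin n → Bool, ENNReal.ofReal (wt P0 x) •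
        Measure.dirac (fun i j => br (x (i, j))) := by
    rw [← law_eq P0 hP]
    unfold lawB
    congr 1; funext i; congr 1; funext j
    simp only [hP0, PS, Sk, Finset.mem_filter, Finset.mem_univ, true_and, ← hℓ, ← hp, ← hq]
    have : ((Equiv.symm (1 : Equiv.Perm (Fin n))) : Fin n → Fin n) = id := rfl
    simp only [this, id]
    by_cases h : (i : ℕ) + 1 ≤ n - ℓ ∧ (j : ℕ) + 1 ≤ n - ℓ
    · rw [if_pos h, if_neg (by omega)]
    · rw [if_neg h, if_pos (by omega)]
  set K := Fintype.card (Equiv.Perm (Fin n)) with hK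
  have hK0 : 0 < K := Fintype.card_pos
  have hU : uniformPerm n = ∑ σ : Equiv.Perm (Fin n), ENNReal.ofReal ((K : ℝ)⁻¹) • Measure.dirac σ := by
    unfold uniformPerm
    rw [← Finset.smul_sum, Measure.count, Measure.sum_fintype, ENNReal.ofReal_inv_of_pos (by positivity),
      ENNReal.ofReal_natCast]
  have hw0 := wt_nonneg hP
  have hprod : (uniformPerm n).prod (lawB n d) =
      ∑ z : Equiv.Perm (Fin n) × (Fin n × Fin n → Bool), ENNReal.ofReal ((K : ℝ)⁻¹ * wt P0 z.2) •
        Measure.dirac (z.1, fun i j => br (z.2 (i, j))) := by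
    have : IsFiniteMeasure (lawB n d) := by
      rw [hB]
      refine ⟨?_⟩
      simp only [Measure.coe_finsetSum, Finset.sum_apply, Measure.smul_apply, measure_univ, smul_eq_mul, mul_one]
      exact ENNReal.sum_lt_top.2 fun a _ => ENNReal.ofReal_lt_top
    have : IsFiniteMeasure (uniformPerm n) := by
      rw [hU]
      refine ⟨?_⟩
      simp only [Measure.coe_finsetSum, Finset.sum_apply, Measure.smul_apply, measure_univ, smul_eq_mul, mul_one]
      exact ENNReal.sum_lt_top.2 fun a _ => ENNReal.ofReal_lt_top
    refine Measure.prod_eq fun s t hs ht => ?_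
    rw [hU, hB]
    simp only [Measure.coe_finsetSum, Finset.sum_apply, Measure.smul_apply, smul_eq_mul]
    rw [Finset.sum_mul_sum, Fintype.sum_prod_type]
    refine Finset.sum_congr rfl fun σ _ => Finset.sum_congr rfl fun x _ => ?_
    rw [Measure.dirac_apply' _ hs, Measure.dirac_apply' _ ht, Measure.dirac_apply' _ (hs.prod ht),
      ENNReal.ofReal_mul (by positivity)]
    by_cases h1 : σ ∈ s <;> by_cases h2 : (fun i j => br (x (i, j))) ∈ t <;> simp [h1, h2]
  have hmeas : Measurable (fun p : Equiv.Perm (Fin n) × (Fin n → Fin n → ℝ) => fun i j =>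
      ((p.1.permMatrix ℝ)ᵀ * Matrix.of p.2 * p.1.permMatrix ℝ) i j) := by
    have : DiscreteMeasurableSpace (Equiv.Perm (Fin n)) := ⟨fun _ => trivial⟩
    refine measurable_from_prod_countable_right fun σ => ?_
    simp only [conj_apply]
    fun_prop
  have hmap : lawConjB n d = ∑ z : Equiv.Perm (Fin n) × (Fin n × Fin n → Bool),
      ENNReal.ofReal ((K : ℝ)⁻¹ * wt P0 z.2) •
        Measure.dirac (fun i j => br (z.2 (z.1.symm i, z.1.symm j))) := by
    unfold lawConjB
    rw [hprod]
    ext s hs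
    rw [Measure.map_apply hmeas hs]
    simp only [Measure.coe_finsetSum, Finset.sum_apply, Measure.smul_apply, smul_eq_mul]
    refine Finset.sum_congr rfl fun z _ => ?_
    congr 1
    rw [Measure.dirac_apply' _ hs, Measure.dirac_apply' _ (hmeas hs)]
    have hz : ((z.1, fun i j => br (z.2 (i, j))) ∈ (fun p : Equiv.Perm (Fin n) × (Fin n → Fin n → ℝ) =>
        fun i j => ((p.1.permMatrix ℝ)ᵀ * Matrix.of p.2 * p.1.permMatrix ℝ) i j) ⁻¹' s) ↔
        (fun i j => br (z.2 (z.1.symm i, z.1.symm j))) ∈ s := by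
      rw [Set.mem_preimage]
      simp only [conj_apply]
    by_cases h : (fun i j => br (z.2 (z.1.symm i, z.1.symm j))) ∈ s
    · rw [Set.indicator_of_mem (hz.2 h), Set.indicator_of_mem h]; rfl
    · rw [Set.indicator_of_notMem (mt hz.1 h), Set.indicator_of_notMem h]
  rw [hmap, atomic_apply _ (fun z => mul_nonneg (by positivity) (hw0 _)), Fintype.sum_prod_type,
    Finset.mul_sum]
  refine Finset.sum_congr rfl fun σ _ => ?_
  simp only [mul_assoc]
  rw [← Finset.mul_sum]
  congr 1
  unfold Ex
  symm
  rw [← Equiv.sum_comp (Equiv.arrowCongr (Equiv.prodCongr σ σ) (Equiv.refl Bool))]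
  refine Finset.sum_congr rfl fun x _ => ?_
  congr 1
  unfold wt
  rw [← Equiv.prod_comp (Equiv.prodCongr σ σ)]
  refine Finset.prod_congr rfl fun e _ => ?_
  have h1 : PS p q (Sk ℓ σ) ((Equiv.prodCongr σ σ) e) = P0 e := by
    simp only [hP0, PS, Sk, Finset.mem_filter, Finset.mem_univ, true_and]
    simp [Equiv.prodCongr]
    rfl
  rw [h1]
  simp [Prod.map, hP0]

end Transfer

theorem coupling_TV_estimate (d : ℝ) (hd : 0 < d) :
    ∃ N : ℕ, ∀ n : ℕ, N ≤ n →
      ∀ E : Set (Fin n → Fin n → ℝ),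
        |(iidMatrixLawR n (d / n) E).toReal - (lawConjB n d E).toReal| ≤
          (n : ℝ) ^ (-(1 / 4 : ℝ)) := by
  obtain ⟨N, hN⟩ := asymp d hd
  refine ⟨N, fun n hn E => ?_⟩
  obtain ⟨hn0, hℓn, hp4, hdq, hq1, hfin, hm⟩ := hN n hn
  have hnR : (0 : ℝ) < n := by exact_mod_cast hn0
  set p := d / n with hp
  set q := Real.sqrt (Real.log n) / n with hq
  set ℓ := ⌊(Real.log n) ^ 2⌋₊ with hℓ
  have hp0 : 0 < p := by positivity
  have hp1 : p < 1 := by linarith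
  have hpq : p ≤ q := by rw [hp, hq]; gcongr
  have hρ : q / p = Real.sqrt (Real.log n) / d := by rw [hp, hq]; field_simp
  have hℓ1 : (ℓ : ℝ) ≤ (Real.log n) ^ 2 := Nat.floor_le (sq_nonneg _)
  have hℓ2 : 2 * ℓ ≤ n := by
    have : (2 * ℓ : ℝ) ≤ n := by linarith
    exact_mod_cast this
  set F : (Fin n × Fin n → Bool) → ℝ :=
    fun x => E.indicator (fun _ => (1 : ℝ)) (fun i j => br (x (i, j))) with hF
  have hF01 : ∀ x, 0 ≤ F x ∧ F x ≤ 1 := by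
    intro x
    simp only [hF, Set.indicator]
    split_ifs <;> norm_num
  set u := (q / p) ^ (1 / 4 : ℝ) with hu
  have hqp : 0 ≤ q / p := div_nonneg (hp0.le.trans hpq) hp0.le
  have hu4 : u ^ 4 = q / p := by
    rw [hu, ← Real.rpow_natCast, ← Real.rpow_mul hqp]; norm_num
  have hA : (iidMatrixLawR n p E).toReal = Ex (PS p q (∅ : Finset (Fin n))) F := by
    have hP := PS_prob hp0 hp1 hpq hq1 (∅ : Finset (Fin n))
    have h1 : iidMatrixLawR n p = ∑ x : Fin n × Fin n → Bool,
        ENNReal.ofReal (wt (PS p q (∅ : Finset (Fin n))) x) •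
        Measure.dirac (fun i j => br (x (i, j))) := by
      rw [← law_eq _ hP]
      simp [iidMatrixLawR, PS]
    rw [h1, atomic_apply _ (wt_nonneg hP)]
    rfl
  set ε := 2 * (Real.exp (2 * (n * q) * u ^ 3) / ((n : ℝ) ^ (1 / 10 : ℝ)) ^ 3) + 2 * (n : ℝ) ^ (-(3 / 10) : ℝ) with hε
  have hyb := hybrid (n := n) ℓ (by omega) (fun S => Ex (PS p q S) F) ε (by
    intro k hk σ
    refine one_step hp0 hp4 hpq hq1 (by positivity) hu4 (by positivity) (by positivity) _ F hF01 ?_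
    rw [hρ]
    refine hm _ ?_
    rw [Sk_compl_card]
    have : n ≤ 2 * (n - k) := by omega
    exact_mod_cast this)
  rw [hA, lawConjB_eq d p q hp hq hp0 hp1 hpq hq1 E]
  simp only [Sk_zero, Finset.sum_const, Finset.card_univ, nsmul_eq_mul] at hyb
  have hK0 : (0 : ℝ) < Fintype.card (Equiv.Perm (Fin n)) := by exact_mod_cast Fintype.card_pos
  set K : ℝ := (Fintype.card (Equiv.Perm (Fin n)) : ℝ) with hK
  rw [abs_sub_comm]
  have e1 : K⁻¹ * ∑ σ : Equiv.Perm (Fin n), Ex (PS p q (Sk ℓ σ)) F - Ex (PS p q ∅) F =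
     K⁻¹ * (∑ σ : Equiv.Perm (Fin n), Ex (PS p q (Sk ℓ σ)) F - K * Ex (PS p q ∅) F) := by
    field_simp
  rw [e1, abs_mul, abs_of_pos (inv_pos.2 hK0)]
  have hnq : 2 * (n * q) = 2 * Real.sqrt (Real.log n) := by rw [hq]; field_simp
  have hε0 : 0 ≤ ε := by positivity
  calc _ ≤ K⁻¹ * (ℓ * (K * ε)) := by gcongr
    _ = ℓ * ε := by field_simp
    _ ≤ (Real.log n) ^ 2 * ε := by gcongr
    _ ≤ _ := by
      rw [hε, hu, hρ, hnq]
      exact hfin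
end

section
/- For every η > 0 there exists N such that the following holds for all n ≥ N. Suppose d ∈ [(log n)^{−1/3}, (log n)^{1/3}] and τ ∈ [(log n)^{1/2}/(2n), 2(log n)^{1/2}/n]. Define two probability distributions on n×n {0,1}-matrices M: under P₁, every entry M_{ij} equals 1 with probability d/n independently; under P₂, a uniformly random index σ ∈ [n] is chosen, and then independently each entry M_{ij} equals 1 with probability τ if σ ∈ {i,j} and with probability d/n otherwise. Then TV(P₁, P₂) ≤ n^{−1/3+η}. -/
open MeasureTheory

/-- `P₁`: each entry equals `1` with probability `d/n`, independently. -/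
noncomputable def lawP1 (n : ℕ) (d : ℝ) : Measure (Fin n → Fin n → ℝ) :=
  Measure.pi fun _ => Measure.pi fun _ => bernoulliR (d / n)

/-- The uniform probability measure on `Fin n`. -/
noncomputable def uniformFin (n : ℕ) : Measure (Fin n) :=
  (n : ENNReal)⁻¹ • Measure.count

/-- `P₂`: a uniformly random index `σ ∈ [n]` is chosen, and then independently the entry
`M i j` equals `1` with probability `τ` if `σ ∈ {i, j}` and with probability `d/n` otherwise. -/
noncomputable def lawP2 (n : ℕ) (d τ : ℝ) : Measure (Fin n → Fin n → ℝ) :=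
  (uniformFin n).bind fun σ =>
    Measure.pi fun i => Measure.pi fun j =>
      if σ = i ∨ σ = j then bernoulliR τ else bernoulliR (d / n)


namespace TVRC

/-- Bernoulli weight. -/
noncomputable def wt (p : ℝ) (b : Bool) : ℝ := if b then p else 1 - p

/-- Expectation over product Bernoulli weights. -/
noncomputable def Ex {ι : Type*} [Fintype ι] [DecidableEq ι] (p : ℝ) (F : (ι → Bool) → ℝ) : ℝ :=
  ∑ ω, (∏ e, wt p (ω e)) * F ω

section
variable {ι : Type*} [Fintype ι] [DecidableEq ι]

lemma wt_nonneg {p : ℝ} (h0 : 0 ≤ p) (h1 : p ≤ 1) (b : Bool) : 0 ≤ wt p b := by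
  unfold wt; split_ifs <;> linarith

lemma Ex_mono {p : ℝ} (h0 : 0 ≤ p) (h1 : p ≤ 1) {F G : (ι → Bool) → ℝ} (h : ∀ ω, F ω ≤ G ω) :
    Ex p F ≤ Ex p G :=
  Finset.sum_le_sum fun ω _ => mul_le_mul_of_nonneg_left (h ω)
    (Finset.prod_nonneg fun _ _ => wt_nonneg h0 h1 _)

lemma Ex_add (p : ℝ) (F G : (ι → Bool) → ℝ) : Ex p (fun ω => F ω + G ω) = Ex p F + Ex p G := by
  simp [Ex, mul_add, Finset.sum_add_distrib]

lemma Ex_sub (p : ℝ) (F G : (ι → Bool) → ℝ) : Ex p (fun ω => F ω - G ω) = Ex p F - Ex p G := by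
  simp [Ex, mul_sub, Finset.sum_sub_distrib]

lemma Ex_mul_left (p c : ℝ) (F : (ι → Bool) → ℝ) : Ex p (fun ω => c * F ω) = c * Ex p F := by
  simp only [Ex, Finset.mul_sum]
  exact Finset.sum_congr rfl fun _ _ => by ring

lemma Ex_sum {κ : Type*} (s : Finset κ) (p : ℝ) (F : κ → (ι → Bool) → ℝ) :
    Ex p (fun ω => ∑ k ∈ s, F k ω) = ∑ k ∈ s, Ex p (F k) := by
  simp only [Ex, Finset.mul_sum]
  exact Finset.sum_comm

lemma Ex_prod (p : ℝ) (h : ι → Bool → ℝ) :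
    Ex p (fun ω => ∏ e, h e (ω e)) = ∏ e, (p * h e true + (1 - p) * h e false) := by
  have := Finset.prod_univ_sum (fun _ : ι => (Finset.univ : Finset Bool))
    (fun e b => wt p b * h e b)
  simp only [Fintype.piFinset_univ, Finset.prod_mul_distrib] at this
  simp only [Ex]
  rw [← this]
  exact Finset.prod_congr rfl fun e _ => by simp [wt]

lemma Ex_const (p c : ℝ) : Ex p (fun _ : ι → Bool => c) = c := by
  have := Ex_mul_left (ι := ι) p c (fun _ => 1)
  have h2 := Ex_prod (ι := ι) p (fun _ _ => 1)
  simp only [Finset.prod_const_one, mul_one] at *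
  rw [this, h2]; simp

lemma Ex_nonneg {p : ℝ} (h0 : 0 ≤ p) (h1 : p ≤ 1) {F : (ι → Bool) → ℝ} (h : ∀ ω, 0 ≤ F ω) :
    0 ≤ Ex p F := by
  have := Ex_mono h0 h1 h
  rwa [Ex_const] at this

/-- `F` depends only on coordinates satisfying `q`. -/
def Dep (q : ι → Prop) (F : (ι → Bool) → ℝ) : Prop :=
  ∀ ω ω', (∀ e, q e → ω e = ω' e) → F ω = F ω'

lemma Ex_indep_aux (p : ℝ) (q : ι → Prop) [DecidablePred q] (F G : (ι → Bool) → ℝ)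
    (hF : Dep q F) (hG : Dep (fun e => ¬ q e) G) :
    Ex p (fun ω => F ω * G ω) =
      (∑ a : {e // q e} → Bool, (∏ e, wt p (a e)) *
        F ((Equiv.piEquivPiSubtypeProd q (fun _ => Bool)).symm (a, fun _ => false))) *
      (∑ b : {e // ¬ q e} → Bool, (∏ e, wt p (b e)) *
        G ((Equiv.piEquivPiSubtypeProd q (fun _ => Bool)).symm (fun _ => false, b))) := by
  unfold Ex
  rw [← (Equiv.piEquivPiSubtypeProd q (fun _ => Bool)).symm.sum_comp, Fintype.sum_prod_type,
    Finset.sum_mul_sum]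
  refine Finset.sum_congr rfl fun a _ => Finset.sum_congr rfl fun b _ => ?_
  rw [← Fintype.prod_subtype_mul_prod_subtype q]
  have e1 : ∀ e : {e // q e}, (Equiv.piEquivPiSubtypeProd q (fun _ => Bool)).symm (a, b) e = a e := by
    intro e; simp [Equiv.piEquivPiSubtypeProd, e.2]
  have e2 : ∀ e : {e // ¬ q e},
      (Equiv.piEquivPiSubtypeProd q (fun _ => Bool)).symm (a, b) e = b e := by
    intro e; simp [Equiv.piEquivPiSubtypeProd, e.2]
  have f1 := hF ((Equiv.piEquivPiSubtypeProd q (fun _ => Bool)).symm (a, b))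
    ((Equiv.piEquivPiSubtypeProd q (fun _ => Bool)).symm (a, fun _ => false))
    (by intro e he; simp [Equiv.piEquivPiSubtypeProd, he])
  have f2 := hG ((Equiv.piEquivPiSubtypeProd q (fun _ => Bool)).symm (a, b))
    ((Equiv.piEquivPiSubtypeProd q (fun _ => Bool)).symm (fun _ => false, b))
    (by intro e he; simp [Equiv.piEquivPiSubtypeProd, he])
  simp only [e1, e2]
  rw [f1, f2]; ring

lemma Ex_indep (p : ℝ) (q : ι → Prop) (F G : (ι → Bool) → ℝ)
    (hF : Dep q F) (hG : Dep (fun e => ¬ q e) G) :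
    Ex p (fun ω => F ω * G ω) = Ex p F * Ex p G := by
  classical
  have h1 := Ex_indep_aux p q F G hF hG
  have h2 := Ex_indep_aux p q F (fun _ => 1) hF (fun _ _ _ => rfl)
  have h3 := Ex_indep_aux p q (fun _ => 1) G (fun _ _ _ => rfl) hG
  have h4 := Ex_indep_aux (ι := ι) p q (fun _ => 1) (fun _ => 1) (fun _ _ _ => rfl) (fun _ _ _ => rfl)
  simp only [mul_one, one_mul, Ex_const] at h1 h2 h3 h4
  change Ex p F = _ at h2
  change Ex p G = _ at h3
  rw [h1, h2, h3]
  generalize (∑ a : {e // q e} → Bool, (∏ e, wt p (a e)) *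
        F ((Equiv.piEquivPiSubtypeProd q (fun _ => Bool)).symm (a, fun _ => false))) = A at *
  generalize (∑ b : {e // ¬ q e} → Bool, (∏ e, wt p (b e)) *
        G ((Equiv.piEquivPiSubtypeProd q (fun _ => Bool)).symm (fun _ => false, b))) = B at *
  linear_combination (A * B : ℝ) * h4

/-- Conditional independence given the coordinates in `S` vanish. -/
lemma Ex_cond {p : ℝ} (h0 : 0 ≤ p) (h1 : p ≤ 1) (R R' S : Finset ι) (hS : R ∩ R' ⊆ S)
    (F G : (ι → Bool) → ℝ) (hF : Dep (· ∈ R) F) (hG : Dep (· ∈ R') G)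
    (F0 : ∀ ω, 0 ≤ F ω) (G0 : ∀ ω, 0 ≤ G ω) :
    Ex p (fun ω => F ω * G ω * (∏ e ∈ S, if ω e then 0 else 1)) * (1 - p) ^ S.card
      ≤ Ex p F * Ex p G := by
  set Z : (ι → Bool) → ℝ := fun ω => ∏ e ∈ S, if ω e then 0 else 1 with hZ
  have Z01 : ∀ ω, (Z ω = 0) ∨ (Z ω = 1 ∧ ∀ e ∈ S, ω e = false) := by
    intro ω
    by_cases h : ∀ e ∈ S, ω e = false
    · right
      exact ⟨Finset.prod_eq_one fun e he => by simp [h e he], h⟩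
    · left
      push Not at h
      obtain ⟨e, he, h⟩ := h
      exact Finset.prod_eq_zero he (by simp at h; simp [h])
  have EZ : Ex p Z = (1 - p) ^ S.card := by
    have := Ex_prod (ι := ι) p (fun e b => if e ∈ S then (if b then 0 else 1) else 1)
    have h2 : Z = fun ω => ∏ e, (if e ∈ S then (if ω e then (0:ℝ) else 1) else 1) := by
      ext ω; simp [hZ, Finset.prod_ite_mem]
    rw [h2, this]
    have : ∀ e : ι, (p * (if e ∈ S then (if true then (0:ℝ) else 1) else 1) +
       (1 - p) * (if e ∈ S then (if false then (0:ℝ) else 1) else 1)) =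
       if e ∈ S then (1 - p) else 1 := by
      intro e; split_ifs <;> simp_all
    rw [Finset.prod_congr rfl fun e _ => this e]
    simp [Finset.prod_ite_mem]
  let z : (ι → Bool) → (ι → Bool) := fun ω e => if e ∈ S then false else ω e
  have zz : ∀ ω, (∀ e ∈ S, ω e = false) → z ω = ω := by
    intro ω h; ext e; by_cases he : e ∈ S <;> simp [z, he, h]
  have depF : Dep (· ∈ R \ S) (fun ω => F (z ω)) := by
    intro ω ω' h
    apply hF
    intro e he
    by_cases hs : e ∈ S
    · simp [z, hs]
    · simp only [z, hs, if_false]; exact h e (by simp [he, hs])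
  have depG : Dep (· ∈ R' \ S) (fun ω => G (z ω)) := by
    intro ω ω' h
    apply hG
    intro e he
    by_cases hs : e ∈ S
    · simp [z, hs]
    · simp only [z, hs, if_false]; exact h e (by simp [he, hs])
  have depZ : Dep (· ∈ S) Z := by
    intro ω ω' h
    exact Finset.prod_congr rfl fun e he => by rw [h e he]
  have FZ : (fun ω => F ω * Z ω) = fun ω => F (z ω) * Z ω := by
    ext ω; rcases Z01 ω with h | ⟨h, h'⟩
    · simp [h]
    · rw [zz ω h']
  have GZ : (fun ω => G ω * Z ω) = fun ω => G (z ω) * Z ω := by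
    ext ω; rcases Z01 ω with h | ⟨h, h'⟩
    · simp [h]
    · rw [zz ω h']
  have FGZ : (fun ω => F ω * G ω * Z ω) = fun ω => F (z ω) * (G (z ω) * Z ω) := by
    ext ω; rcases Z01 ω with h | ⟨h, h'⟩
    · simp [h]
    · rw [zz ω h']; ring
  have iG : Ex p (fun ω => G (z ω) * Z ω) = Ex p (fun ω => G (z ω)) * Ex p Z :=
    Ex_indep p (· ∈ R' \ S) _ _ depG (fun ω ω' h => depZ ω ω' fun e he => h e (by simp [he]))
  have iF : Ex p (fun ω => F (z ω) * Z ω) = Ex p (fun ω => F (z ω)) * Ex p Z :=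
    Ex_indep p (· ∈ R \ S) _ _ depF (fun ω ω' h => depZ ω ω' fun e he => h e (by simp [he]))
  have iFG : Ex p (fun ω => F (z ω) * (G (z ω) * Z ω)) =
      Ex p (fun ω => F (z ω)) * Ex p (fun ω => G (z ω) * Z ω) := by
    refine Ex_indep p (· ∈ R \ S) _ _ depF ?_
    intro ω ω' h
    have a1 := depZ ω ω' fun e he => h e (by simp [he])
    have a2 := depG ω ω' fun e he => h e (by
      intro h3
      simp only [Finset.mem_sdiff] at he h3
      exact h3.2 (hS (Finset.mem_inter.2 ⟨h3.1, he.1⟩)))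
    simp only at a2 ⊢
    rw [a1, a2]
  have Zle : ∀ ω, Z ω ≤ 1 := by
    intro ω; rcases Z01 ω with h | ⟨h, h'⟩ <;> rw [h]; norm_num
  have Znn : ∀ ω, 0 ≤ Z ω := by
    intro ω; rcases Z01 ω with h | ⟨h, h'⟩ <;> rw [h]; norm_num
  have bF : Ex p (fun ω => F ω * Z ω) ≤ Ex p F :=
    Ex_mono h0 h1 fun ω => mul_le_of_le_one_right (F0 ω) (Zle ω)
  have bG : Ex p (fun ω => G ω * Z ω) ≤ Ex p G :=
    Ex_mono h0 h1 fun ω => mul_le_of_le_one_right (G0 ω) (Zle ω)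
  have key : Ex p (fun ω => F ω * G ω * Z ω) * (1 - p) ^ S.card =
      Ex p (fun ω => F ω * Z ω) * Ex p (fun ω => G ω * Z ω) := by
    rw [FGZ, iFG, FZ, iF, GZ, iG, ← EZ]; ring
  rw [key]
  exact mul_le_mul bF bG (Ex_nonneg h0 h1 fun ω => mul_nonneg (G0 ω) (Znn ω))
    (Ex_nonneg h0 h1 F0)

end

section
variable {ι : Type*} [Fintype ι] [DecidableEq ι]

/-- one-coordinate likelihood ratio -/
noncomputable def lk (p τ : ℝ) (b : Bool) : ℝ := if b then τ / p else (1 - τ) / (1 - p)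

/-- likelihood ratio on the coordinates `R` -/
noncomputable def Lk (p τ : ℝ) (R : Finset ι) (ω : ι → Bool) : ℝ := ∏ e ∈ R, lk p τ (ω e)

/-- number of ones in `R` -/
noncomputable def Xc (R : Finset ι) (ω : ι → Bool) : ℝ := ∑ e ∈ R, if ω e then 1 else 0

open Classical in
/-- truncated likelihood ratio -/
noncomputable def Fk (p τ : ℝ) (R : Finset ι) (k : ℝ) (ω : ι → Bool) : ℝ :=
  if Xc R ω ≤ k then Lk p τ R ω else 0

lemma Ex_prodR (p : ℝ) (R : Finset ι) (h : Bool → ℝ) :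
    Ex p (fun ω => ∏ e ∈ R, h (ω e)) = (p * h true + (1 - p) * h false) ^ R.card := by
  have h1 := Ex_prod (ι := ι) p (fun e b => if e ∈ R then h b else 1)
  simp only [Finset.prod_ite_mem, Finset.univ_inter] at h1
  rw [h1]
  have : ∀ e : ι, (p * (if e ∈ R then h true else 1) + (1 - p) * (if e ∈ R then h false else 1)) =
      if e ∈ R then (p * h true + (1 - p) * h false) else 1 := by
    intro e; split_ifs <;> ring
  rw [Finset.prod_congr rfl fun e _ => this e]
  simp [Finset.prod_ite_mem]

lemma lk_nonneg {p τ : ℝ} (hp : 0 < p) (hp1 : p < 1) (hτ : 0 ≤ τ) (hτ1 : τ ≤ 1) (b : Bool) :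
    0 ≤ lk p τ b := by
  unfold lk; split_ifs
  · positivity
  · exact div_nonneg (by linarith) (by linarith)

lemma Lk_nonneg {p τ : ℝ} (hp : 0 < p) (hp1 : p < 1) (hτ : 0 ≤ τ) (hτ1 : τ ≤ 1)
    (R : Finset ι) (ω : ι → Bool) : 0 ≤ Lk p τ R ω :=
  Finset.prod_nonneg fun _ _ => lk_nonneg hp hp1 hτ hτ1 _

lemma Fk_nonneg {p τ : ℝ} (hp : 0 < p) (hp1 : p < 1) (hτ : 0 ≤ τ) (hτ1 : τ ≤ 1)
    (R : Finset ι) (k : ℝ) (ω : ι → Bool) : 0 ≤ Fk p τ R k ω := by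
  unfold Fk; split_ifs
  · exact Lk_nonneg hp hp1 hτ hτ1 R ω
  · exact le_rfl

lemma Fk_le {p τ : ℝ} (hp : 0 < p) (hp1 : p < 1) (hτ : 0 ≤ τ) (hτ1 : τ ≤ 1)
    (R : Finset ι) (k : ℝ) (ω : ι → Bool) : Fk p τ R k ω ≤ Lk p τ R ω := by
  unfold Fk; split_ifs
  · exact le_rfl
  · exact Lk_nonneg hp hp1 hτ hτ1 R ω

lemma Ex_Lk {p τ : ℝ} (hp : 0 < p) (hp1 : p < 1) (R : Finset ι) : Ex p (Lk p τ R) = 1 := by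
  have := Ex_prodR p R (lk p τ)
  unfold Lk
  rw [this]
  have h : p * lk p τ true + (1 - p) * lk p τ false = 1 := by
    have : 1 - p ≠ 0 := by linarith
    simp only [lk]; simp; field_simp; ring
  rw [h, one_pow]

lemma Fk_dep (p τ : ℝ) (R : Finset ι) (k : ℝ) : Dep (· ∈ R) (Fk p τ R k) := by
  intro ω ω' h
  have h1 : Xc R ω = Xc R ω' := Finset.sum_congr rfl fun e he => by rw [h e he]
  have h2 : Lk p τ R ω = Lk p τ R ω' := Finset.prod_congr rfl fun e he => by rw [h e he]
  simp only [Fk, h1, h2]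

lemma exp_Xc (c : ℝ) (R : Finset ι) (ω : ι → Bool) :
    Real.exp (c * Xc R ω) = ∏ e ∈ R, if ω e then Real.exp c else 1 := by
  rw [Xc, Finset.mul_sum, Real.exp_sum]
  refine Finset.prod_congr rfl fun e _ => ?_
  split_ifs <;> simp

lemma one_add_pow_le (x : ℝ) (hx : 0 ≤ 1 + x) (m : ℕ) : (1 + x) ^ m ≤ Real.exp (m * x) := by
  rw [Real.exp_nat_mul]
  exact pow_le_pow_left₀ hx (by linarith [Real.add_one_le_exp x]) m

lemma tail_bound {p τ : ℝ} (hp : 0 < p) (hp1 : p < 1) (hτ : 0 ≤ τ) (hτ1 : τ ≤ 1)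
    (R : Finset ι) (k a : ℝ) (ha : 0 ≤ a) :
    Ex p (fun ω => Lk p τ R ω - Fk p τ R k ω) ≤ Real.exp (-(a * k) + R.card * (τ * Real.exp a)) := by
  have h1 : ∀ ω : ι → Bool, Lk p τ R ω - Fk p τ R k ω ≤
      Real.exp (-(a * k)) * ∏ e ∈ R, (lk p τ (ω e) * if ω e then Real.exp a else 1) := by
    intro ω
    rw [Finset.prod_mul_distrib, ← exp_Xc]
    change _ ≤ _ * (Lk p τ R ω * _)
    have hL := Lk_nonneg hp hp1 hτ hτ1 R ω
    rw [mul_left_comm, ← Real.exp_add]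
    unfold Fk
    split_ifs with hx
    · rw [sub_self]; positivity
    · rw [sub_zero]
      refine le_mul_of_one_le_right hL (Real.one_le_exp ?_)
      push Not at hx
      nlinarith
  refine (Ex_mono hp.le hp1.le h1).trans ?_
  rw [Ex_mul_left, Ex_prodR p R (fun b => lk p τ b * if b then Real.exp a else 1), Real.exp_add]
  refine mul_le_mul_of_nonneg_left ?_ (Real.exp_pos _).le
  have he : p * (lk p τ true * if (true : Bool) = true then Real.exp a else 1) +
      (1 - p) * (lk p τ false * if (false : Bool) = true then Real.exp a else 1) =
      τ * Real.exp a + (1 - τ) := by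
    have : 1 - p ≠ 0 := by linarith
    simp only [lk]; simp; field_simp
  rw [he]
  refine (pow_le_pow_left₀ ?_ ?_ _).trans (one_add_pow_le (τ * Real.exp a) (by positivity) _)
  · have := Real.exp_pos a
    have : 0 ≤ 1 - τ := by linarith
    positivity
  · linarith

lemma second_bound {p τ : ℝ} (hp : 0 < p) (hp1 : p < 1) (hpτ : p ≤ τ) (hτ1 : τ ≤ 1)
    (R : Finset ι) (k b : ℝ) (hb : 0 ≤ b) :
    Ex p (fun ω => Fk p τ R k ω * Fk p τ R k ω) ≤
      Real.exp (b * k + R.card * (Real.exp (-b) * (τ ^ 2 / p))) := by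
  have hτ : 0 ≤ τ := by linarith
  have h1 : ∀ ω : ι → Bool, Fk p τ R k ω * Fk p τ R k ω ≤
      Real.exp (b * k) * ∏ e ∈ R, (lk p τ (ω e) ^ 2 * if ω e then Real.exp (-b) else 1) := by
    intro ω
    rw [Finset.prod_mul_distrib, ← exp_Xc, Finset.prod_pow]
    change _ ≤ _ * (Lk p τ R ω ^ 2 * _)
    have hL := Lk_nonneg hp hp1 hτ hτ1 R ω
    rw [mul_left_comm, ← Real.exp_add]
    unfold Fk
    split_ifs with hx
    · rw [← sq]
      refine le_mul_of_one_le_right (sq_nonneg _) (Real.one_le_exp ?_)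
      nlinarith
    · rw [zero_mul]; positivity
  refine (Ex_mono hp.le hp1.le h1).trans ?_
  rw [Ex_mul_left, Ex_prodR p R (fun c => lk p τ c ^ 2 * if c then Real.exp (-b) else 1),
    Real.exp_add]
  refine mul_le_mul_of_nonneg_left ?_ (Real.exp_pos _).le
  have hq : 0 < 1 - p := by linarith
  have he : p * (lk p τ true ^ 2 * if (true : Bool) = true then Real.exp (-b) else 1) +
      (1 - p) * (lk p τ false ^ 2 * if (false : Bool) = true then Real.exp (-b) else 1) =
      (1 - τ) ^ 2 / (1 - p) + Real.exp (-b) * (τ ^ 2 / p) := by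
    simp only [lk]; simp; field_simp; ring
  rw [he]
  have h2 : (1 - τ) ^ 2 / (1 - p) ≤ 1 := by
    rw [div_le_one hq]; nlinarith
  refine (pow_le_pow_left₀ (by positivity) ?_ _).trans
    (one_add_pow_le (Real.exp (-b) * (τ ^ 2 / p)) (by positivity) _)
  linarith

lemma cross_bound {p τ : ℝ} (hp : 0 < p) (hp1 : p < 1) (hpτ : p ≤ τ) (hτ1 : τ ≤ 1)
    (R R' : Finset ι) (e0 : ι) (h0 : e0 ∈ R ∩ R') :
    Ex p (fun ω => Lk p τ R ω * Lk p τ R' ω * if ω e0 then 1 else 0) ≤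
      τ ^ 2 / p * (1 + τ ^ 2 / p) ^ (R ∩ R').card := by
  have hτ : 0 ≤ τ := by linarith
  have hq : 0 < 1 - p := by linarith
  have h1 := Ex_prod (ι := ι) p (fun e b => (if e ∈ R then lk p τ b else 1) *
    (if e ∈ R' then lk p τ b else 1) * (if e = e0 then (if b then 1 else 0) else 1))
  simp only [Finset.prod_mul_distrib, Finset.prod_ite_mem, Finset.univ_inter,
    Finset.prod_ite_eq', Finset.mem_univ, if_true] at h1
  change Ex p (fun ω => Lk p τ R ω * Lk p τ R' ω * if ω e0 then 1 else 0) = _ at h1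
  rw [h1]
  have h2 : τ ^ 2 / p * (1 + τ ^ 2 / p) ^ (R ∩ R').card =
     ∏ e : ι, ((if e = e0 then τ ^ 2 / p else 1) * (if e ∈ R ∩ R' then 1 + τ ^ 2 / p else 1)) := by
    rw [Finset.prod_mul_distrib, Finset.prod_ite_mem, Finset.univ_inter, Finset.prod_ite_eq']
    simp
  rw [h2]
  have hs : 0 ≤ τ ^ 2 / p := by positivity
  have ht := lk_nonneg hp hp1 hτ hτ1
  have h3 : (1 - τ) ^ 2 / (1 - p) ≤ 1 := by
    rw [div_le_one hq]; nlinarith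
  have e1 : p * (lk p τ true * lk p τ true) = τ ^ 2 / p := by
    simp only [lk]; simp; field_simp
  have e2 : (1 - p) * (lk p τ false * lk p τ false) = (1 - τ) ^ 2 / (1 - p) := by
    simp only [lk]; simp; field_simp
  have e3 : p * lk p τ true + (1 - p) * lk p τ false = 1 := by
    simp only [lk]; simp; field_simp; ring
  refine Finset.prod_le_prod (fun e _ => ?_) (fun e _ => ?_)
  · have h4 := ht true
    have h5 := ht false
    refine add_nonneg (mul_nonneg hp.le ?_) (mul_nonneg hq.le ?_) <;>
    refine mul_nonneg (mul_nonneg ?_ ?_) ?_ <;> split_ifs <;> first | assumption | norm_num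
  · by_cases he : e = e0
    · subst he
      obtain ⟨ha, hb⟩ := Finset.mem_inter.1 h0
      simp only [ha, hb, Finset.mem_inter, and_self, if_true, Bool.false_eq_true, if_false]
      nlinarith
    · by_cases ha : e ∈ R <;> by_cases hb : e ∈ R' <;> simp [he, ha, hb] <;> linarith

lemma off_bound {p τ : ℝ} (hp : 0 < p) (hp1 : p ≤ 1 / 4) (hpτ : p ≤ τ) (hτ1 : τ ≤ 1)
    (hs : τ ^ 2 / p ≤ 1)
    (R R' : Finset ι) (hc : (R ∩ R').card ≤ 2) (k : ℝ) :
    Ex p (fun ω => Fk p τ R k ω * Fk p τ R' k ω) - Ex p (Fk p τ R k) * Ex p (Fk p τ R' k) ≤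
      12 * (τ ^ 2 / p) := by
  have hτ : 0 ≤ τ := by linarith
  have hp1' : p < 1 := by linarith
  have hs0 : 0 ≤ τ ^ 2 / p := by positivity
  have hps : p ≤ τ ^ 2 / p := by rw [le_div_iff₀ hp]; nlinarith
  have hF := Fk_nonneg (ι := ι) hp hp1' hτ hτ1
  have hFL := Fk_le (ι := ι) hp hp1' hτ hτ1
  have hL := Lk_nonneg (ι := ι) hp hp1' hτ hτ1
  have c := Ex_cond hp.le hp1'.le R R' (R ∩ R') subset_rfl _ _ (Fk_dep p τ R k) (Fk_dep p τ R' k)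
    (hF R k) (hF R' k)
  have E1 : ∀ R : Finset ι, Ex p (Fk p τ R k) ≤ 1 := fun R => by
    rw [← Ex_Lk (τ := τ) hp hp1' R]; exact Ex_mono hp.le hp1'.le (hFL R k)
  have E0 : ∀ R : Finset ι, 0 ≤ Ex p (Fk p τ R k) := fun R =>
    Ex_nonneg hp.le hp1'.le (hF R k)
  set S := R ∩ R' with hS
  set A := Ex p (fun ω => Fk p τ R k ω * Fk p τ R' k ω * (∏ e ∈ S, if ω e then 0 else 1)) with hA
  have hA0 : 0 ≤ A := Ex_nonneg hp.le hp1'.le fun ω => mul_nonneg (mul_nonneg (hF R k ω) (hF R' k ω))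
    (Finset.prod_nonneg fun e _ => by split_ifs <;> norm_num)
  have split : ∀ ω : ι → Bool, Fk p τ R k ω * Fk p τ R' k ω ≤
      Fk p τ R k ω * Fk p τ R' k ω * (∏ e ∈ S, if ω e then 0 else 1) +
      ∑ e0 ∈ S, Lk p τ R ω * Lk p τ R' ω * if ω e0 then 1 else 0 := by
    intro ω
    have a0 := mul_nonneg (hF R k ω) (hF R' k ω)
    have b0 : ∀ e0, 0 ≤ Lk p τ R ω * Lk p τ R' ω * (if ω e0 then (1:ℝ) else 0) := fun e0 =>
      mul_nonneg (mul_nonneg (hL R ω) (hL R' ω)) (by split_ifs <;> norm_num)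
    by_cases h : ∃ e ∈ S, ω e = true
    · obtain ⟨e, he, h⟩ := h
      have := Finset.single_le_sum (fun e0 _ => b0 e0) he
      simp only [h, if_true, mul_one] at this
      rw [Finset.prod_eq_zero he (by simp [h]), mul_zero, zero_add]
      exact (mul_le_mul (hFL R k ω) (hFL R' k ω) (hF R' k ω) (hL R ω)).trans this
    · push Not at h
      rw [Finset.prod_eq_one (fun e he => by simp [h e he]), mul_one]
      exact le_add_of_nonneg_right (Finset.sum_nonneg fun e _ => b0 e)
  have m := Ex_mono hp.le hp1'.le split
  rw [Ex_add, Ex_sum] at m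
  have s : ∑ e0 ∈ S, Ex p (fun ω => Lk p τ R ω * Lk p τ R' ω * if ω e0 then 1 else 0) ≤
      8 * (τ ^ 2 / p) := by
    calc _ ≤ ∑ e0 ∈ S, 4 * (τ ^ 2 / p) := Finset.sum_le_sum fun e0 he => by
            refine (cross_bound hp hp1' hpτ hτ1 R R' e0 he).trans ?_
            have : (1 + τ ^ 2 / p) ^ (R ∩ R').card ≤ 2 ^ 2 :=
              (pow_le_pow_left₀ (by linarith) (by linarith : 1 + τ ^ 2 / p ≤ 2) _).trans
                (pow_le_pow_right₀ (by norm_num) hc)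
            nlinarith
      _ = S.card * (4 * (τ ^ 2 / p)) := by simp
      _ ≤ 2 * (4 * (τ ^ 2 / p)) := by
        refine mul_le_mul_of_nonneg_right (by exact_mod_cast hc) (by linarith)
      _ = _ := by ring
  have hpow : (1 - p) ^ 2 ≤ (1 - p) ^ S.card :=
    pow_le_pow_of_le_one (by linarith) (by linarith) hc
  have c2 : A * (1 - p) ^ 2 ≤ Ex p (Fk p τ R k) * Ex p (Fk p τ R' k) :=
    (mul_le_mul_of_nonneg_left hpow hA0).trans c
  set P := Ex p (Fk p τ R k) * Ex p (Fk p τ R' k)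
  have P1 : P ≤ 1 := mul_le_one₀ (E1 R) (E0 R') (E1 R')
  have P0 : 0 ≤ P := mul_nonneg (E0 R) (E0 R')
  have A2 : A ≤ P + 4 * p := by
    have q : 1 ≤ (1 + 4 * p) * (1 - p) ^ 2 := by
      have : 0 ≤ p * (2 - 7 * p + 4 * p ^ 2) := mul_nonneg hp.le (by nlinarith)
      nlinarith
    have : A ≤ P * (1 + 4 * p) := by
      calc A ≤ A * ((1 + 4 * p) * (1 - p) ^ 2) := le_mul_of_one_le_right hA0 q
        _ = (A * (1 - p) ^ 2) * (1 + 4 * p) := by ring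
        _ ≤ _ := mul_le_mul_of_nonneg_right c2 (by linarith)
    nlinarith
  linarith

/-- The TV bound in finite-sum form. -/
lemma tv_finite {p τ : ℝ} (hp : 0 < p) (hp1 : p ≤ 1 / 4) (hpτ : p ≤ τ) (hτ1 : τ ≤ 1)
    (hs : τ ^ 2 / p ≤ 1) (n : ℕ) (hn : 0 < n) (R : Fin n → Finset ι)
    (hR : ∀ σ, (R σ).card ≤ 2 * n) (hRR : ∀ σ σ', σ ≠ σ' → (R σ ∩ R σ').card ≤ 2)
    (k a b : ℝ) (ha : 0 ≤ a) (hb : 0 ≤ b) :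
    Ex p (fun ω => |1 - (n : ℝ)⁻¹ * ∑ σ, Lk p τ (R σ) ω|) ≤
      2 * Real.exp (-(a * k) + 2 * n * (τ * Real.exp a)) +
      √((n : ℝ)⁻¹ * Real.exp (b * k + 2 * n * (Real.exp (-b) * (τ ^ 2 / p))) + 12 * (τ ^ 2 / p)) := by
  have hτ : 0 ≤ τ := by linarith
  have hp1' : p < 1 := by linarith
  have hn' : (0:ℝ) < n := by exact_mod_cast hn
  have hF := Fk_nonneg (ι := ι) hp hp1' hτ hτ1
  have hFL := Fk_le (ι := ι) hp hp1' hτ hτ1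
  have hs0 : 0 ≤ τ ^ 2 / p := by positivity
  have hcard : ∀ σ, ((R σ).card : ℝ) ≤ 2 * n := fun σ => by exact_mod_cast hR σ
  set D := Real.exp (-(a * k) + 2 * n * (τ * Real.exp a)) with hD
  set V := Real.exp (b * k + 2 * n * (Real.exp (-b) * (τ ^ 2 / p))) with hV
  have tail : ∀ σ, Ex p (fun ω => Lk p τ (R σ) ω - Fk p τ (R σ) k ω) ≤ D := fun σ =>
    (tail_bound hp hp1' hτ hτ1 (R σ) k a ha).trans (Real.exp_le_exp.2 (by
      have := mul_le_mul_of_nonneg_right (hcard σ) (by positivity : 0 ≤ τ * Real.exp a)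
      linarith))
  have sec : ∀ σ, Ex p (fun ω => Fk p τ (R σ) k ω * Fk p τ (R σ) k ω) ≤ V := fun σ =>
    (second_bound hp hp1' hpτ hτ1 (R σ) k b hb).trans (Real.exp_le_exp.2 (by
      have := mul_le_mul_of_nonneg_right (hcard σ) (by positivity : 0 ≤ Real.exp (-b) * (τ ^ 2 / p))
      linarith))
  set M : (ι → Bool) → ℝ := fun ω => (n : ℝ)⁻¹ * ∑ σ, Fk p τ (R σ) k ω with hM
  set T : (ι → Bool) → ℝ := fun ω => (n : ℝ)⁻¹ * ∑ σ, (Lk p τ (R σ) ω - Fk p τ (R σ) k ω) with hT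
  have ET : Ex p T ≤ D := by
    rw [hT, Ex_mul_left, Ex_sum]
    calc _ ≤ (n : ℝ)⁻¹ * ∑ σ : Fin n, D := by
          refine mul_le_mul_of_nonneg_left (Finset.sum_le_sum fun σ _ => tail σ) (by positivity)
      _ = D := by simp; field_simp
  have MT : ∀ ω, (n : ℝ)⁻¹ * ∑ σ, Lk p τ (R σ) ω = M ω + T ω := by
    intro ω; simp only [hM, hT, Finset.sum_sub_distrib]; ring
  have T0 : ∀ ω, 0 ≤ T ω := fun ω =>
    mul_nonneg (by positivity) (Finset.sum_nonneg fun σ _ => sub_nonneg.2 (hFL _ _ _))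
  have tot : Ex p M + Ex p T = 1 := by
    rw [← Ex_add]
    have : (fun ω => M ω + T ω) = fun ω => (n : ℝ)⁻¹ * ∑ σ, Lk p τ (R σ) ω := by
      ext ω; rw [MT]
    rw [this, Ex_mul_left, Ex_sum]
    have : ∀ σ, Ex p (fun ω => Lk p τ (R σ) ω) = 1 := fun σ => Ex_Lk hp hp1' (R σ)
    simp only [this]; simp; field_simp
  set m := Ex p M with hm
  have var : Ex p (fun ω => (M ω - m) ^ 2) ≤ (n : ℝ)⁻¹ * V + 12 * (τ ^ 2 / p) := by
    have e1 : (fun ω => (M ω - m) ^ 2) = fun ω => (M ω * M ω - (2 * m) * M ω) + m ^ 2 := by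
      ext ω; ring
    rw [e1, Ex_add, Ex_sub, Ex_mul_left, Ex_const, ← hm]
    have e2 : (fun ω => M ω * M ω) = fun ω => ((n : ℝ)⁻¹ * (n : ℝ)⁻¹) *
        ∑ σ, ∑ σ', Fk p τ (R σ) k ω * Fk p τ (R σ') k ω := by
      ext ω; rw [← Finset.sum_mul_sum]; simp only [hM]; ring
    have e3 : m = (n : ℝ)⁻¹ * ∑ σ, Ex p (Fk p τ (R σ) k) := by
      rw [hm, hM, Ex_mul_left, Ex_sum]
    have e4 : m * m = ((n : ℝ)⁻¹ * (n : ℝ)⁻¹) *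
        ∑ σ, ∑ σ', Ex p (Fk p τ (R σ) k) * Ex p (Fk p τ (R σ') k) := by
      rw [← Finset.sum_mul_sum, e3]; ring
    have e5 : Ex p (fun ω => M ω * M ω) - m * m = ((n : ℝ)⁻¹ * (n : ℝ)⁻¹) *
        ∑ σ, ∑ σ', (Ex p (fun ω => Fk p τ (R σ) k ω * Fk p τ (R σ') k ω) -
          Ex p (Fk p τ (R σ) k) * Ex p (Fk p τ (R σ') k)) := by
      rw [e2, e4, Ex_mul_left, Ex_sum]
      simp only [Ex_sum, Finset.sum_sub_distrib]; ring
    have e6 : Ex p (fun ω => M ω * M ω) - m * m ≤ (n : ℝ)⁻¹ * V + 12 * (τ ^ 2 / p) := by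
      rw [e5]
      calc _ ≤ ((n : ℝ)⁻¹ * (n : ℝ)⁻¹) * ∑ σ : Fin n, ∑ σ' : Fin n,
              ((if σ = σ' then V else 0) + 12 * (τ ^ 2 / p)) := by
            refine mul_le_mul_of_nonneg_left (Finset.sum_le_sum fun σ _ =>
              Finset.sum_le_sum fun σ' _ => ?_) (by positivity)
            split_ifs with h
            · subst h
              have := sec σ
              have h2 := mul_self_nonneg (Ex p (Fk p τ (R σ) k))
              linarith
            · have := off_bound hp hp1 hpτ hτ1 hs (R σ) (R σ') (hRR σ σ' h) k
              linarith
        _ = _ := by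
            simp [Finset.sum_add_distrib]; field_simp
    nlinarith
  have cs : Ex p (fun ω => |M ω - m|) ≤ √((n : ℝ)⁻¹ * V + 12 * (τ ^ 2 / p)) := by
    apply Real.le_sqrt_of_sq_le
    refine le_trans ?_ var
    set c := Ex p (fun ω => |M ω - m|) with hc
    have := Ex_nonneg hp.le hp1'.le (fun ω => sq_nonneg (|M ω - m| - c))
    have e1 : (fun ω => (|M ω - m| - c) ^ 2) =
        fun ω => ((M ω - m) ^ 2 - (2 * c) * |M ω - m|) + c ^ 2 := by
      ext ω; rw [← sq_abs (M ω - m)]; ring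
    rw [e1, Ex_add, Ex_sub, Ex_mul_left, Ex_const, ← hc] at this
    nlinarith
  have fin : ∀ ω, |1 - (n : ℝ)⁻¹ * ∑ σ, Lk p τ (R σ) ω| ≤ (|M ω - m| + T ω) + (1 - m) := by
    intro ω
    rw [MT]
    have h1 : 0 ≤ 1 - m := by
      have := Ex_nonneg hp.le hp1'.le T0; linarith
    have h2 := T0 ω
    have h3 := le_abs_self (M ω - m)
    have h4 := neg_abs_le (M ω - m)
    rw [abs_le]; constructor <;> linarith
  refine (Ex_mono hp.le hp1'.le fin).trans ?_
  rw [Ex_add, Ex_add, Ex_const]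
  linarith

end

section
open Classical

lemma isProb_bern {q : ℝ} (h0 : 0 ≤ q) (h1 : q ≤ 1) : IsProbabilityMeasure (bernoulliR q) := by
  constructor
  simp only [bernoulliR, Measure.add_apply, Measure.smul_apply, measure_univ, smul_eq_mul, mul_one]
  rw [← ENNReal.ofReal_add h0 (by linarith)]
  simp

/-- the matrix coded by `ω` -/
noncomputable def cc {n : ℕ} (ω : Fin n × Fin n → Bool) : Fin n → Fin n → ℝ :=
  fun i j => if ω (i, j) then 1 else 0

lemma cc_inj {n : ℕ} : Function.Injective (cc (n := n)) := by
  intro ω ω' h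
  ext ⟨i, j⟩
  have := congrFun (congrFun h i) j
  simp only [cc] at this
  by_cases h1 : ω (i, j) <;> by_cases h2 : ω' (i, j) <;> simp_all

lemma bern_singleton (q : ℝ) (b : Bool) :
    bernoulliR q {if b then (1:ℝ) else 0} = ENNReal.ofReal (wt q b) := by
  cases b <;> simp [bernoulliR, wt]

lemma pi_law {n : ℕ} (q : Fin n → Fin n → ℝ) (h0 : ∀ i j, 0 ≤ q i j) (h1 : ∀ i j, q i j ≤ 1)
    (E : Set (Fin n → Fin n → ℝ)) :
    (Measure.pi (fun i => Measure.pi fun j => bernoulliR (q i j)) E) =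
      ENNReal.ofReal (∑ ω : Fin n × Fin n → Bool, (∏ e, wt (q e.1 e.2) (ω e)) *
        if cc ω ∈ E then 1 else 0) := by
  haveI : ∀ i j, IsProbabilityMeasure (bernoulliR (q i j)) := fun i j => isProb_bern (h0 i j) (h1 i j)
  set P := Measure.pi (fun i => Measure.pi fun j => bernoulliR (q i j)) with hP
  have wn : ∀ ω : Fin n × Fin n → Bool, 0 ≤ ∏ e, wt (q e.1 e.2) (ω e) := fun ω =>
    Finset.prod_nonneg fun e _ => wt_nonneg (h0 _ _) (h1 _ _) _
  have sing : ∀ ω, P {cc ω} = ENNReal.ofReal (∏ e, wt (q e.1 e.2) (ω e)) := by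
    intro ω
    rw [hP, Measure.pi_singleton]
    simp only [Measure.pi_singleton]
    simp only [cc, bern_singleton]
    rw [ENNReal.ofReal_prod_of_nonneg (fun e _ => wt_nonneg (h0 _ _) (h1 _ _) _),
      Fintype.prod_prod_type]
  have fin : ∀ s : Finset (Fin n × Fin n → Bool), P (s.image cc : Finset _) =
      ENNReal.ofReal (∑ ω ∈ s, ∏ e, wt (q e.1 e.2) (ω e)) := by
    intro s
    rw [← sum_measure_singleton, Finset.sum_image (fun a _ b _ h => cc_inj h),
      ENNReal.ofReal_sum_of_nonneg (fun ω _ => wn ω)]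
    exact Finset.sum_congr rfl fun ω _ => sing ω
  have tot : ∑ ω : Fin n × Fin n → Bool, ∏ e, wt (q e.1 e.2) (ω e) = 1 := by
    have := Finset.prod_univ_sum (fun _ : Fin n × Fin n => (Finset.univ : Finset Bool))
      (fun e b => wt (q e.1 e.2) b)
    rw [Fintype.piFinset_univ] at this
    rw [← this]
    exact Finset.prod_eq_one fun e _ => by simp [wt]
  have null : P (((Finset.univ.image cc : Finset (Fin n → Fin n → ℝ)) : Set (Fin n → Fin n → ℝ))ᶜ) = 0 := by
    rw [prob_compl_eq_zero_iff (Finset.measurableSet _), fin, tot, ENNReal.ofReal_one]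
  have hE : P E = P (((Finset.univ.filter fun ω => cc ω ∈ E).image cc : Finset _) :
      Set (Fin n → Fin n → ℝ)) := by
    apply le_antisymm
    · calc P E ≤ P ((((Finset.univ.filter fun ω => cc ω ∈ E).image cc : Finset _) :
            Set (Fin n → Fin n → ℝ)) ∪ ((Finset.univ.image cc : Finset (Fin n → Fin n → ℝ)) : Set (Fin n → Fin n → ℝ))ᶜ) := by
            apply measure_mono
            intro x hx
            by_cases h : ∃ ω, cc ω = x
            · left
              obtain ⟨ω, rfl⟩ := h
              simp only [Finset.coe_image, Finset.coe_filter]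
              exact ⟨ω, by simpa using hx, rfl⟩
            · right
              simpa using h
        _ ≤ _ := (measure_union_le _ _).trans (by rw [null, add_zero])
    · apply measure_mono
      intro x hx
      simp only [Finset.coe_image, Finset.coe_filter] at hx
      obtain ⟨ω, h, rfl⟩ := hx
      simpa using h
  rw [hE, fin, Finset.sum_filter]
  congr 1
  exact Finset.sum_congr rfl fun ω _ => by split_ifs <;> simp

lemma lawP2_eq (n : ℕ) (d τ : ℝ) : lawP2 n d τ = (n : ENNReal)⁻¹ • ∑ σ : Fin n,
    Measure.pi fun i => Measure.pi fun j =>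
      (if σ = i ∨ σ = j then bernoulliR τ else bernoulliR (d / n)) := by
  ext s hs
  rw [lawP2, Measure.bind_apply hs (measurable_of_finite _).aemeasurable, uniformFin,
    lintegral_smul_measure, lintegral_count, tsum_fintype, Measure.smul_apply,
    Measure.finsetSum_apply]

/-- row-column cross -/
def cross (n : ℕ) (σ : Fin n) : Finset (Fin n × Fin n) :=
  Finset.univ.filter fun e => σ = e.1 ∨ σ = e.2

lemma cross_card (n : ℕ) (σ : Fin n) : (cross n σ).card ≤ 2 * n := by
  have : cross n σ ⊆ (Finset.univ.image fun j => (σ, j)) ∪ (Finset.univ.image fun j => (j, σ)) := by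
    rintro ⟨i, j⟩ h
    simp only [cross, Finset.mem_filter, Finset.mem_univ, true_and] at h
    rcases h with rfl | rfl <;> simp
  refine (Finset.card_le_card this).trans ((Finset.card_union_le _ _).trans ?_)
  have h1 := Finset.card_image_le (s := (Finset.univ : Finset (Fin n))) (f := fun j => (σ, j))
  have h2 := Finset.card_image_le (s := (Finset.univ : Finset (Fin n))) (f := fun j => (j, σ))
  simp only [Finset.card_univ, Fintype.card_fin] at h1 h2
  omega

lemma cross_inter (n : ℕ) (σ σ' : Fin n) (h : σ ≠ σ') : (cross n σ ∩ cross n σ').card ≤ 2 := by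
  have : cross n σ ∩ cross n σ' ⊆ {(σ, σ'), (σ', σ)} := by
    rintro ⟨i, j⟩ h
    simp only [cross, Finset.mem_inter, Finset.mem_filter, Finset.mem_univ, true_and] at h
    simp only [Finset.mem_insert, Finset.mem_singleton, Prod.mk.injEq]
    grind
  exact (Finset.card_le_card this).trans Finset.card_le_two

lemma tv_measure {n : ℕ} (hn : 0 < n) {d τ : ℝ} (hp : 0 < d / n) (hp1 : d / n ≤ 1 / 4)
    (hpτ : d / n ≤ τ) (hτ1 : τ ≤ 1) (E : Set (Fin n → Fin n → ℝ)) :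
    |(lawP1 n d E).toReal - (lawP2 n d τ E).toReal| ≤
      Ex (d / n) (fun ω => |1 - (n : ℝ)⁻¹ * ∑ σ, Lk (d / n) τ (cross n σ) ω|) := by
  set p := d / n with hpd
  have hn' : (0:ℝ) < n := by exact_mod_cast hn
  have e1 : (lawP1 n d E).toReal = Ex p (fun ω => if cc ω ∈ E then 1 else 0) := by
    rw [lawP1, pi_law (fun _ _ => d / n) (fun _ _ => hp.le) (fun _ _ => by linarith) E,
      ENNReal.toReal_ofReal]
    · rfl
    · exact Ex_nonneg hp.le (by linarith) fun ω => by split_ifs <;> norm_num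
  have hq0 : ∀ σ i j : Fin n, 0 ≤ (if σ = i ∨ σ = j then τ else p) := by
    intros; split_ifs <;> linarith
  have hq1 : ∀ σ i j : Fin n, (if σ = i ∨ σ = j then τ else p) ≤ 1 := by
    intros; split_ifs <;> linarith
  have hw : ∀ (σ : Fin n) (ω : Fin n × Fin n → Bool),
      ∏ e, wt (if σ = e.1 ∨ σ = e.2 then τ else p) (ω e) =
      (∏ e, wt p (ω e)) * Lk p τ (cross n σ) ω := by
    intro σ ω
    have : Lk p τ (cross n σ) ω = ∏ e, if e ∈ cross n σ then lk p τ (ω e) else 1 := by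
      rw [Finset.prod_ite_mem, Finset.univ_inter, Lk]
    rw [this, ← Finset.prod_mul_distrib]
    refine Finset.prod_congr rfl fun e _ => ?_
    have hmem : e ∈ cross n σ ↔ (σ = e.1 ∨ σ = e.2) := by simp [cross]
    have hq : 1 - p ≠ 0 := by linarith
    have hp' : p ≠ 0 := hp.ne'
    simp only [hmem]
    by_cases h : σ = e.1 ∨ σ = e.2
    · simp only [h, if_true]
      cases ω e <;> simp [wt, lk] <;> field_simp
    · simp only [h, if_false, mul_one]
  have e2 : ∀ σ : Fin n, (Measure.pi (fun i => Measure.pi fun j =>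
      (if σ = i ∨ σ = j then bernoulliR τ else bernoulliR (d / n))) E) =
      ENNReal.ofReal (Ex p (fun ω => Lk p τ (cross n σ) ω * if cc ω ∈ E then 1 else 0)) := by
    intro σ
    have h := pi_law (fun i j => if σ = i ∨ σ = j then τ else p) (hq0 σ) (hq1 σ) E
    have h2 : (fun i : Fin n => Measure.pi fun j =>
      (if σ = i ∨ σ = j then bernoulliR τ else bernoulliR (d / n))) =
      (fun i => Measure.pi fun j => bernoulliR (if σ = i ∨ σ = j then τ else p)) := by
      funext i; congr 1; funext j; split_ifs <;> rfl
    rw [h2, h]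
    congr 1
    unfold Ex
    refine Finset.sum_congr rfl fun ω _ => ?_
    rw [hw, mul_assoc]
  have nn : ∀ σ : Fin n, 0 ≤ Ex p (fun ω => Lk p τ (cross n σ) ω * if cc ω ∈ E then 1 else 0) :=
    fun σ => Ex_nonneg hp.le (by linarith) fun ω =>
      mul_nonneg (Lk_nonneg hp (by linarith) (by linarith) hτ1 _ _) (by split_ifs <;> norm_num)
  have e3 : (lawP2 n d τ E).toReal =
      Ex p (fun ω => ((n : ℝ)⁻¹ * ∑ σ, Lk p τ (cross n σ) ω) * if cc ω ∈ E then 1 else 0) := by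
    rw [lawP2_eq, Measure.smul_apply, Measure.finsetSum_apply, Finset.sum_congr rfl fun σ _ => e2 σ,
      ← ENNReal.ofReal_sum_of_nonneg fun σ _ => nn σ, smul_eq_mul, ENNReal.toReal_mul,
      ENNReal.toReal_ofReal (Finset.sum_nonneg fun σ _ => nn σ), ENNReal.toReal_inv,
      ENNReal.toReal_natCast, ← Ex_sum, ← Ex_mul_left]
    congr 1
    ext ω
    rw [← Finset.sum_mul, mul_assoc]
  rw [e1, e3, ← Ex_sub]
  have up : ∀ ω : Fin n × Fin n → Bool, |((if cc ω ∈ E then (1:ℝ) else 0) -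
      ((n : ℝ)⁻¹ * ∑ σ, Lk p τ (cross n σ) ω) * if cc ω ∈ E then 1 else 0)| ≤
      |1 - (n : ℝ)⁻¹ * ∑ σ, Lk p τ (cross n σ) ω| := by
    intro ω; split_ifs
    · simp
    · simp
  rw [abs_le]
  constructor
  · have := Ex_mono hp.le (by linarith) fun ω => (abs_le.1 (up ω)).1
    have h2 := Ex_mul_left p (-1) (fun ω => |1 - (n : ℝ)⁻¹ * ∑ σ, Lk p τ (cross n σ) ω|)
    simp only [neg_one_mul] at h2
    rwa [h2] at this
  · exact Ex_mono hp.le (by linarith) fun ω => (abs_le.1 (up ω)).2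

end

lemma exp_small {y : ℝ} (h : 1000 ≤ y) : Real.exp (-y) ≤ 1 / 1000 := by
  rw [Real.exp_neg, inv_eq_one_div]
  exact one_div_le_one_div_of_le (by norm_num) (by linarith [Real.add_one_le_exp y])

lemma ev_facts : ∀ᶠ x : ℝ in Filter.atTop, 1000000 ≤ x ∧ 8 * x ^ (35 / 36 : ℝ) ≤ x / 100 ∧
    x ^ (4 / 3 : ℝ) ≤ Real.exp (1 / 10 * x) := by
  have h1 := (isLittleO_rpow_exp_pos_mul_atTop (4 / 3 : ℝ) (by norm_num : (0:ℝ) < 1 / 10)).bound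
    (by norm_num : (0:ℝ) < 1)
  have h2 := (tendsto_rpow_atTop (by norm_num : (0:ℝ) < 1 / 36)).eventually_ge_atTop 800
  filter_upwards [h1, h2, Filter.eventually_ge_atTop 1000000] with x h1 h2 h3
  have hx : 0 < x := by linarith
  refine ⟨h3, ?_, ?_⟩
  · have : x = x ^ (35 / 36 : ℝ) * x ^ (1 / 36 : ℝ) := by
      rw [← Real.rpow_add hx]; norm_num
    have hp := Real.rpow_pos_of_pos hx (35 / 36)
    nlinarith
  · rw [Real.norm_of_nonneg (by positivity), Real.norm_of_nonneg (Real.exp_pos _).le, one_mul] at h1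
    exact h1

lemma main_bound {n : ℕ} (hn : 0 < n) {d τ x : ℝ} (hx : x = Real.log n)
    (hx1 : 1000000 ≤ x) (hx2 : 8 * x ^ (35 / 36 : ℝ) ≤ x / 100)
    (hx3 : x ^ (4 / 3 : ℝ) ≤ Real.exp (1 / 10 * x))
    (hd1 : x ^ (-(1 / 3 : ℝ)) ≤ d) (hd2 : d ≤ x ^ ((1 : ℝ) / 3))
    (ht1 : √x / (2 * n) ≤ τ) (ht2 : τ ≤ 2 * √x / n) (E : Set (Fin n → Fin n → ℝ)) :
    |(lawP1 n d E).toReal - (lawP2 n d τ E).toReal| ≤ Real.exp (-(x / 3)) := by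
  have hn' : (0:ℝ) < n := by exact_mod_cast hn
  have hx0 : 0 < x := by linarith
  have hne : (n : ℝ) = Real.exp x := by rw [hx, Real.exp_log hn']
  have hninv : (n : ℝ)⁻¹ = Real.exp (-x) := by rw [hne, Real.exp_neg]
  have hd0 : 0 < d := (Real.rpow_pos_of_pos hx0 _).trans_le hd1
  have hp : 0 < d / n := by positivity
  have hsx : √x = x ^ (1 / 2 : ℝ) := Real.sqrt_eq_rpow x
  have hs0 : 0 < √x := Real.sqrt_pos.2 hx0
  have hτ0 : 0 < τ := lt_of_lt_of_le (by positivity) ht1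
  have hmono : ∀ {u v : ℝ}, u ≤ v → x ^ u ≤ x ^ v := fun h =>
    Real.rpow_le_rpow_of_exponent_le (by linarith) h
  have hq : x ^ (4 / 3 : ℝ) / n ≤ Real.exp (-(9 / 10 * x)) := by
    rw [div_eq_mul_inv, hninv]
    calc _ ≤ Real.exp (1 / 10 * x) * Real.exp (-x) :=
          mul_le_mul_of_nonneg_right hx3 (Real.exp_pos _).le
      _ = _ := by rw [← Real.exp_add]; ring_nf
  have hq' : Real.exp (-(9 / 10 * x)) ≤ 1 / 1000 := exp_small (by linarith)
  have hp1 : d / n ≤ 1 / 4 := by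
    have : d / n ≤ x ^ (4 / 3 : ℝ) / n :=
      div_le_div_of_nonneg_right (hd2.trans (hmono (by norm_num))) hn'.le
    linarith
  have hτ1 : τ ≤ 1 := by
    have : √x / n ≤ x ^ (4 / 3 : ℝ) / n :=
      div_le_div_of_nonneg_right (by rw [hsx]; exact hmono (by norm_num)) hn'.le
    have h2 : 2 * √x / n = 2 * (√x / n) := by ring
    linarith
  have h6 : 2 * x ^ (1 / 3 : ℝ) ≤ √x := by
    have e : √x = x ^ (1 / 6 : ℝ) * x ^ (1 / 3 : ℝ) := by
      rw [hsx, ← Real.rpow_add hx0]; norm_num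
    have h2 : (2:ℝ) ≤ x ^ (1 / 6 : ℝ) := by
      have h : (64:ℝ) ^ (1 / 6 : ℝ) ≤ x ^ (1 / 6 : ℝ) :=
        Real.rpow_le_rpow (by norm_num) (by linarith) (by norm_num)
      have h' : (64:ℝ) ^ (1 / 6 : ℝ) = 2 := by
        rw [show (64:ℝ) = 2 ^ (6:ℝ) by norm_num, ← Real.rpow_mul (by norm_num)]; norm_num
      linarith
    rw [e]
    exact mul_le_mul_of_nonneg_right h2 (Real.rpow_pos_of_pos hx0 _).le
  have hpτ : d / n ≤ τ := by
    refine le_trans ?_ ht1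
    rw [div_le_div_iff₀ hn' (by positivity)]
    nlinarith
  have hs4 : τ ^ 2 / (d / n) ≤ 4 * (x ^ (4 / 3 : ℝ) / n) := by
    have a1 : τ ^ 2 ≤ (2 * √x / n) ^ 2 := pow_le_pow_left₀ hτ0.le ht2 2
    have a2 : (2 * √x / n) ^ 2 = 4 * x / n ^ 2 := by
      rw [div_pow, mul_pow, Real.sq_sqrt hx0.le]; norm_num
    rw [div_le_iff₀ hp]
    have a3 : x ≤ x ^ (4 / 3 : ℝ) * d := by
      calc x = x ^ (4 / 3 : ℝ) * x ^ (-(1 / 3 : ℝ)) := by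
            rw [← Real.rpow_add hx0]; norm_num
        _ ≤ _ := mul_le_mul_of_nonneg_left hd1 (Real.rpow_pos_of_pos hx0 _).le
    calc τ ^ 2 ≤ 4 * x / n ^ 2 := by rw [← a2]; exact a1
      _ ≤ 4 * (x ^ (4 / 3 : ℝ) * d) / n ^ 2 := by gcongr
      _ = _ := by field_simp
  have hs : τ ^ 2 / (d / n) ≤ 1 := by linarith
  have hlog : 0 < Real.log x := Real.log_pos (by linarith)
  have key := tv_finite hp hp1 hpτ hτ1 hs n hn (cross n) (cross_card n) (cross_inter n)
    (3 / 4 * x / Real.log x) (17 / 36 * Real.log x) (13 / 36 * Real.log x)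
    (by positivity) (by positivity)
  refine (tv_measure hn hp hp1 hpτ hτ1 E).trans (key.trans ?_)
  have ea : Real.exp (17 / 36 * Real.log x) = x ^ (17 / 36 : ℝ) := by
    rw [Real.rpow_def_of_pos hx0, mul_comm]
  have eb : Real.exp (-(13 / 36 * Real.log x)) = x ^ (-(13 / 36) : ℝ) := by
    rw [Real.rpow_def_of_pos hx0]; congr 1; ring
  have ka : 17 / 36 * Real.log x * (3 / 4 * x / Real.log x) = 17 / 48 * x := by
    field_simp; norm_num
  have kb : 13 / 36 * Real.log x * (3 / 4 * x / Real.log x) = 13 / 48 * x := by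
    field_simp; norm_num
  rw [ea, eb, ka, kb]
  have t1 : 2 * n * (τ * x ^ (17 / 36 : ℝ)) ≤ x / 100 := by
    have : n * τ ≤ 2 * √x := by rw [le_div_iff₀ hn'] at ht2; linarith
    have h35 : √x * x ^ (17 / 36 : ℝ) = x ^ (35 / 36 : ℝ) := by
      rw [hsx, ← Real.rpow_add hx0]; norm_num
    have hh := Real.rpow_pos_of_pos hx0 (17 / 36)
    have hh2 := Real.rpow_pos_of_pos hx0 (35 / 36)
    have := mul_le_mul_of_nonneg_right this hh.le
    nlinarith
  have t2 : 2 * n * (x ^ (-(13 / 36) : ℝ) * (τ ^ 2 / (d / n))) ≤ x / 100 := by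
    have hh := Real.rpow_pos_of_pos hx0 (-(13 / 36))
    calc _ ≤ 2 * n * (x ^ (-(13 / 36) : ℝ) * (4 * (x ^ (4 / 3 : ℝ) / n))) := by gcongr
      _ = 8 * (x ^ (-(13 / 36) : ℝ) * x ^ (4 / 3 : ℝ)) := by field_simp; ring
      _ = 8 * x ^ (35 / 36 : ℝ) := by rw [← Real.rpow_add hx0]; norm_num
      _ ≤ _ := hx2
  have f1 : Real.exp (-(17 / 48 * x) + 2 * n * (τ * x ^ (17 / 36 : ℝ))) ≤
      Real.exp (-(x / 3)) * (1 / 1000) := by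
    calc _ ≤ Real.exp (-(x / 3) + -(13 / 1200 * x)) := Real.exp_le_exp.2 (by linarith)
      _ = Real.exp (-(x / 3)) * Real.exp (-(13 / 1200 * x)) := Real.exp_add _ _
      _ ≤ _ := mul_le_mul_of_nonneg_left (exp_small (by linarith)) (Real.exp_pos _).le
  have hsq : Real.exp (-(x / 3)) ^ 2 = Real.exp (-(2 / 3 * x)) := by
    rw [← Real.exp_nat_mul]; congr 1; push_cast; ring
  have f2 : (n : ℝ)⁻¹ * Real.exp (13 / 48 * x + 2 * n * (x ^ (-(13 / 36) : ℝ) * (τ ^ 2 / (d / n)))) ≤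
      Real.exp (-(x / 3)) ^ 2 * (1 / 1000) := by
    rw [hninv, hsq, ← Real.exp_add]
    calc _ ≤ Real.exp (-(2 / 3 * x) + -(1 / 20 * x)) := Real.exp_le_exp.2 (by linarith)
      _ = Real.exp (-(2 / 3 * x)) * Real.exp (-(1 / 20 * x)) := Real.exp_add _ _
      _ ≤ _ := mul_le_mul_of_nonneg_left (exp_small (by linarith)) (Real.exp_pos _).le
  have f3 : Real.exp (-(9 / 10 * x)) ≤ Real.exp (-(x / 3)) ^ 2 * (1 / 1000) := by
    rw [hsq]
    calc _ = Real.exp (-(2 / 3 * x) + -(7 / 30 * x)) := by congr 1; ring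
      _ = Real.exp (-(2 / 3 * x)) * Real.exp (-(7 / 30 * x)) := Real.exp_add _ _
      _ ≤ _ := mul_le_mul_of_nonneg_left (exp_small (by linarith)) (Real.exp_pos _).le
  have hpos := Real.exp_pos (-(x / 3))
  have f4 : √((n : ℝ)⁻¹ * Real.exp (13 / 48 * x +
      2 * n * (x ^ (-(13 / 36) : ℝ) * (τ ^ 2 / (d / n)))) + 12 * (τ ^ 2 / (d / n))) ≤
      1 / 2 * Real.exp (-(x / 3)) := by
    apply Real.sqrt_le_iff.2
    constructor
    · positivity
    · have := sq_nonneg (Real.exp (-(x / 3)))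
      rw [mul_pow]
      linarith
  linarith

end TVRC

theorem tv_modified_row_column (η : ℝ) (hη : 0 < η) :
    ∃ N : ℕ, ∀ n : ℕ, N ≤ n → ∀ d τ : ℝ,
      d ∈ Set.Icc ((Real.log n) ^ (-(1 / 3 : ℝ))) ((Real.log n) ^ ((1 : ℝ) / 3)) →
      τ ∈ Set.Icc (Real.sqrt (Real.log n) / (2 * n)) (2 * Real.sqrt (Real.log n) / n) →
      ∀ E : Set (Fin n → Fin n → ℝ),
        |(lawP1 n d E).toReal - (lawP2 n d τ E).toReal| ≤ (n : ℝ) ^ (-(1 / 3 : ℝ) + η) := by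
  have h := (Real.tendsto_log_atTop.comp tendsto_natCast_atTop_atTop).eventually TVRC.ev_facts
  obtain ⟨N, hN⟩ := Filter.eventually_atTop.1 h
  refine ⟨max N 1, fun n hn d τ hd hτ E => ?_⟩
  obtain ⟨h1, h2, h3⟩ := hN n ((le_max_left _ _).trans hn)
  have hn1 : 1 ≤ n := (le_max_right _ _).trans hn
  have hn' : (0:ℝ) < n := by exact_mod_cast hn1
  refine (TVRC.main_bound hn1 rfl h1 h2 h3 hd.1 hd.2 hτ.1 hτ.2 E).trans ?_
  rw [Real.rpow_def_of_pos hn']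
  apply Real.exp_le_exp.2
  simp only [Function.comp] at h1
  nlinarith
end

section
/- Fix δ > 0. There exist constants c > 0 and C > 0 depending only on δ such that the following holds. Let n be a positive integer, let m and ℓ be integers with ℓ ∈ {m, m+1} and m/n ∈ [1/2, 2], and let p satisfy pm ∈ [1+δ, δ^{−1}]. Let M be an m×ℓ random matrix with independent Ber(p) entries. Then for every integer k with 0 ≤ k ≤ cn, the expected number of subsets S ⊆ [ℓ] of size k whose set of unique neighbors satisfies |U(S)| < α(k)·k is at most C·e^{−ck}, where α(x) = (log(n/x))^{−2}. -/
open MeasureTheory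

/-- The law of an `m × l` matrix with iid `Ber(p)` entries. -/
noncomputable def iidRectLaw (m l : ℕ) (p : ℝ) : Measure (Fin m → Fin l → ℝ) :=
  Measure.pi fun _ => Measure.pi fun _ => bernoulliR p

/-- `α(x) = (log (n/x))⁻²`. -/
noncomputable def alphaFn (n : ℕ) (x : ℝ) : ℝ :=
  ((Real.log ((n : ℝ) / x)) ^ 2)⁻¹

/-- The set of unique neighbours `U(S)` of a set `S` of columns of an `m × l` matrix:
rows outside `S` having exactly one `1` in a column of `S`, together with rows in `S`
having no `1` in any column of `S` (rows and columns are identified via their index). -/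
def uniqueNbrSet {m l : ℕ} (M : Matrix (Fin m) (Fin l) ℝ) (S : Finset (Fin l)) :
    Set (Fin m) :=
  {i | ((∃ j ∈ S, (j : ℕ) = (i : ℕ)) ∧ ∀ j ∈ S, M i j = 0) ∨
       ((¬ ∃ j ∈ S, (j : ℕ) = (i : ℕ)) ∧ {j : Fin l | j ∈ S ∧ M i j = 1}.ncard = 1)}

lemma bern_integrable (p : ℝ) (f : ℝ → ℝ) : Integrable f (bernoulliR p) := by
  unfold bernoulliR
  refine Integrable.add_measure ?_ ?_
  · exact (integrable_dirac (by simp)).smul_measure (by simp)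
  · exact (integrable_dirac (by simp)).smul_measure (by simp)

lemma bern_prob (p : ℝ) (h0 : 0 ≤ p) (h1 : p ≤ 1) : IsProbabilityMeasure (bernoulliR p) := by
  constructor
  unfold bernoulliR
  simp [← ENNReal.ofReal_add h0 (sub_nonneg.2 h1)]

lemma bern_integral (p : ℝ) (h0 : 0 ≤ p) (h1 : p ≤ 1) (f : ℝ → ℝ) :
    ∫ x, f x ∂(bernoulliR p) = p * f 1 + (1 - p) * f 0 := by
  unfold bernoulliR
  rw [integral_add_measure]
  · simp [integral_smul_measure, h0, h1]
  · exact (integrable_dirac (by simp)).smul_measure (by simp)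
  · exact (integrable_dirac (by simp)).smul_measure (by simp)

/-- one-site factor: `1{x=1}` at `j`, `1{x≠1}` at other sites of `S`. -/
noncomputable def phi {l : ℕ} (S : Finset (Fin l)) (j j' : Fin l) (x : ℝ) : ℝ :=
  if j' = j then (if x = 1 then 1 else 0) else if j' ∈ S then (if x = 1 then 0 else 1) else 1

noncomputable def psi {l : ℕ} (j j' : Fin l) (x : ℝ) : ℝ :=
  if j' = j then (if x = 0 then 0 else 1) else 1

noncomputable def hIn {l : ℕ} (t : ℝ) (S : Finset (Fin l)) (r : Fin l → ℝ) : ℝ :=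
  t + ∑ j ∈ S, ∏ j', psi j j' (r j')

noncomputable def hOut {l : ℕ} (t : ℝ) (S : Finset (Fin l)) (r : Fin l → ℝ) : ℝ :=
  1 - (1 - t) * ∑ j ∈ S, ∏ j', phi S j j' (r j')

lemma psi_prod {l : ℕ} (j : Fin l) (r : Fin l → ℝ) :
    ∏ j', psi j j' (r j') = if r j = 0 then 0 else 1 := by
  rw [Finset.prod_eq_single j]
  · simp [psi]
  · intro b _ hb; simp [psi, hb]
  · simp

lemma phi_prod {l : ℕ} (S : Finset (Fin l)) (j : Fin l) (r : Fin l → ℝ) :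
    ∏ j', phi S j j' (r j') =
      if r j = 1 ∧ ∀ j' ∈ S, r j' = 1 → j' = j then 1 else 0 := by
  split_ifs with h
  · apply Finset.prod_eq_one
    intro j' _
    unfold phi
    split_ifs with h1 h2 h3 h4
    · rfl
    · subst h1; exact absurd h.1 h2
    · exact absurd (h.2 j' h3 h4) h1
    · rfl
    · rfl
  · rw [not_and_or] at h
    rcases h with h | h
    · exact Finset.prod_eq_zero (Finset.mem_univ j) (by simp [phi, h])
    · push Not at h
      obtain ⟨j', a, b, c⟩ := h
      exact Finset.prod_eq_zero (Finset.mem_univ j') (by simp [phi, a, b, c])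

/-- row indicator weight -/
lemma hIn_ge {l : ℕ} (t : ℝ) (ht0 : 0 ≤ t) (S : Finset (Fin l)) (r : Fin l → ℝ) :
    t ≤ hIn t S r ∧ ((¬ ∀ j ∈ S, r j = 0) → 1 ≤ hIn t S r) := by
  unfold hIn
  simp_rw [psi_prod]
  have hnn : ∀ j ∈ S, (0:ℝ) ≤ if r j = 0 then 0 else 1 := by
    intro j _; split_ifs <;> norm_num
  constructor
  · linarith [Finset.sum_nonneg hnn]
  · intro h
    push Not at h
    obtain ⟨j, hj, hr⟩ := h
    have := Finset.single_le_sum hnn hj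
    simp [hr] at this
    simp at *
    linarith

lemma hOut_ge {l : ℕ} (t : ℝ) (ht1 : t ≤ 1) (S : Finset (Fin l)) (r : Fin l → ℝ) :
    t ≤ hOut t S r ∧ (({j : Fin l | j ∈ S ∧ r j = 1}.ncard ≠ 1) → 1 ≤ hOut t S r) := by
  unfold hOut
  simp_rw [phi_prod]
  by_cases h : ∃ j ∈ S, r j = 1 ∧ ∀ j' ∈ S, r j' = 1 → j' = j
  · obtain ⟨j, hj, h1, h2⟩ := h
    have hset : {j : Fin l | j ∈ S ∧ r j = 1} = {j} := by
      ext x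
      simp only [Set.mem_ofPred_eq, Set.mem_singleton_iff]
      exact ⟨fun hx => h2 x hx.1 hx.2, fun hx => hx ▸ ⟨hj, h1⟩⟩
    have hs : (∑ x ∈ S, if r x = 1 ∧ ∀ j' ∈ S, r j' = 1 → j' = x then (1:ℝ) else 0) = 1 := by
      rw [Finset.sum_eq_single_of_mem j hj]
      · rw [if_pos ⟨h1, h2⟩]
      · intro b hb hbj
        rw [if_neg]
        intro hc
        exact hbj (h2 b hb hc.1)
    rw [hs, hset]
    simp
  · push Not at h
    have hs : (∑ x ∈ S, if r x = 1 ∧ ∀ j' ∈ S, r j' = 1 → j' = x then (1:ℝ) else 0) = 0 := by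
      apply Finset.sum_eq_zero
      intro x hx
      rw [if_neg]
      rintro ⟨a, b⟩
      obtain ⟨y, hy, hy1, hy2⟩ := h x hx a
      exact hy2 (b y hy hy1)
    rw [hs]
    simpa using ht1

lemma prod_int {l : ℕ} (p : ℝ) (h0 : 0 ≤ p) (h1 : p ≤ 1) (f : Fin l → ℝ → ℝ) :
    Integrable (fun r : Fin l → ℝ => ∏ j, f j (r j)) (Measure.pi fun _ => bernoulliR p) ∧
    ∫ r, ∏ j, f j (r j) ∂(Measure.pi fun _ : Fin l => bernoulliR p)
      = ∏ j, (p * f j 1 + (1 - p) * f j 0) := by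
  have := bern_prob p h0 h1
  refine ⟨Integrable.fintype_prod fun j => bern_integrable p (f j), ?_⟩
  rw [integral_fintype_prod_eq_prod]
  simp_rw [bern_integral p h0 h1]

lemma hIn_int {l : ℕ} (p t : ℝ) (h0 : 0 ≤ p) (h1 : p ≤ 1) (S : Finset (Fin l)) :
    Integrable (hIn t S) (Measure.pi fun _ => bernoulliR p) ∧
    ∫ r, hIn t S r ∂(Measure.pi fun _ : Fin l => bernoulliR p) = t + S.card * p := by
  have := bern_prob p h0 h1
  have hi : ∀ j ∈ S, Integrable (fun r : Fin l → ℝ => ∏ j', psi j j' (r j'))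
      (Measure.pi fun _ => bernoulliR p) := fun j _ => (prod_int p h0 h1 (psi j)).1
  have hi2 := integrable_finsetSum S hi
  unfold hIn
  refine ⟨(integrable_const t).add hi2, ?_⟩
  rw [integral_add (integrable_const t) hi2, integral_finsetSum S hi]
  have : ∀ j ∈ S, ∫ r, ∏ j', psi j j' (r j') ∂(Measure.pi fun _ : Fin l => bernoulliR p) = p := by
    intro j _
    rw [(prod_int p h0 h1 (psi j)).2, Finset.prod_eq_single j]
    · simp [psi]
    · intro b _ hb; simp [psi, hb]
    · simp
  rw [Finset.sum_congr rfl this]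
  simp

lemma hOut_int {l : ℕ} (p t : ℝ) (h0 : 0 ≤ p) (h1 : p ≤ 1) (S : Finset (Fin l)) :
    Integrable (hOut t S) (Measure.pi fun _ => bernoulliR p) ∧
    ∫ r, hOut t S r ∂(Measure.pi fun _ : Fin l => bernoulliR p)
      = 1 - (1 - t) * (S.card * (p * (1 - p) ^ (S.card - 1))) := by
  have := bern_prob p h0 h1
  have hi : ∀ j ∈ S, Integrable (fun r : Fin l → ℝ => ∏ j', phi S j j' (r j'))
      (Measure.pi fun _ => bernoulliR p) := fun j _ => (prod_int p h0 h1 (phi S j)).1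
  have hi2 := (integrable_finsetSum S hi).const_mul (1 - t)
  unfold hOut
  refine ⟨(integrable_const 1).sub hi2, ?_⟩
  rw [integral_sub (integrable_const 1) hi2, integral_const_mul, integral_finsetSum S hi]
  have : ∀ j ∈ S, ∫ r, ∏ j', phi S j j' (r j') ∂(Measure.pi fun _ : Fin l => bernoulliR p)
      = p * (1 - p) ^ (S.card - 1) := by
    intro j hj
    rw [(prod_int p h0 h1 (phi S j)).2, ← Finset.mul_prod_erase _ _ (Finset.mem_univ j)]
    congr 1
    · simp [phi]
    · rw [← Finset.card_erase_of_mem hj, ← Finset.prod_const]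
      symm
      apply Finset.prod_subset_one_on_sdiff
      · intro x hx; simp at hx ⊢; exact hx.1
      · intro x hx
        simp at hx
        have : x ∉ S := fun h => (hx.2 hx.1) h
        simp [phi, hx.1, this]
      · intro x hx
        simp at hx
        simp [phi, hx.1, hx.2]
  rw [Finset.sum_congr rfl this]
  simp

open Classical in
noncomputable def hRow {m l : ℕ} (t : ℝ) (S : Finset (Fin l)) (i : Fin m) (r : Fin l → ℝ) : ℝ :=
  if ∃ j ∈ S, (j : ℕ) = (i : ℕ) then hIn t S r else hOut t S r

open Classical in
noncomputable def aCard (m : ℕ) {l : ℕ} (S : Finset (Fin l)) : ℕ :=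
  (Finset.univ.filter fun i : Fin m => ∃ j ∈ S, (j : ℕ) = (i : ℕ)).card

lemma hRow_prod_ge {m l : ℕ} (t : ℝ) (ht0 : 0 ≤ t) (ht1 : t ≤ 1) (S : Finset (Fin l))
    (M : Fin m → Fin l → ℝ) :
    t ^ ((uniqueNbrSet (Matrix.of M) S).ncard) ≤ ∏ i, hRow t S i (M i) := by
  classical
  have h1 : t ^ ((uniqueNbrSet (Matrix.of M) S).ncard)
      = ∏ i, if i ∈ uniqueNbrSet (Matrix.of M) S then t else 1 := by
    rw [Set.ncard_eq_toFinset_card', Finset.prod_ite]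
    simp
  rw [h1]
  apply Finset.prod_le_prod
  · intro i _; split_ifs <;> positivity
  · intro i _
    obtain ⟨a1, a2⟩ := hIn_ge t ht0 S (M i)
    obtain ⟨b1, b2⟩ := hOut_ge t ht1 S (M i)
    unfold hRow
    split_ifs with h2 h3 h3
    · exact a1
    · exact b1
    · apply a2
      intro h
      exact h2 (Or.inl ⟨h3, h⟩)
    · apply b2
      intro h
      exact h2 (Or.inr ⟨h3, h⟩)

lemma hRow_prod_int {m l : ℕ} (p t : ℝ) (h0 : 0 ≤ p) (h1 : p ≤ 1) (S : Finset (Fin l)) :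
    Integrable (fun M : Fin m → Fin l → ℝ => ∏ i, hRow t S i (M i)) (iidRectLaw m l p) ∧
    ∫ M, ∏ i, hRow t S i (M i) ∂(iidRectLaw m l p)
      = (t + S.card * p) ^ (aCard m S) *
        (1 - (1 - t) * (S.card * (p * (1 - p) ^ (S.card - 1)))) ^ (m - aCard m S) := by
  classical
  have := bern_prob p h0 h1
  unfold iidRectLaw
  constructor
  · apply Integrable.fintype_prod (f := fun i => hRow t S i)
    intro i
    unfold hRow
    split_ifs
    · exact (hIn_int p t h0 h1 S).1
    · exact (hOut_int p t h0 h1 S).1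
  · rw [integral_fintype_prod_eq_prod (f := fun i => hRow t S i)]
    have : ∀ i : Fin m, ∫ r, hRow t S i r ∂(Measure.pi fun _ : Fin l => bernoulliR p) =
        if ∃ j ∈ S, (j : ℕ) = (i : ℕ) then t + S.card * p else
          1 - (1 - t) * (S.card * (p * (1 - p) ^ (S.card - 1))) := by
      intro i
      unfold hRow
      split_ifs
      · exact (hIn_int p t h0 h1 S).2
      · exact (hOut_int p t h0 h1 S).2
    simp_rw [this]
    rw [Finset.prod_ite, Finset.prod_const, Finset.prod_const]
    have hc := Finset.card_filter_add_card_filter_not (s := (Finset.univ : Finset (Fin m)))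
      (fun i : Fin m => ∃ j ∈ S, (j : ℕ) = (i : ℕ))
    simp only [Finset.card_univ, Fintype.card_fin] at hc
    have h3 : (Finset.univ.filter fun i : Fin m => ¬ ∃ j ∈ S, (j : ℕ) = (i : ℕ)).card
      = m - aCard m S := by
      unfold aCard
      convert Nat.eq_sub_of_add_eq' hc
    rw [h3]
    unfold aCard
    congr! 
lemma aCard_eq {m l : ℕ} (hml : m ≤ l) (S : Finset (Fin l)) :
    aCard m S = (S.filter fun j : Fin _ => (j : ℕ) < m).card := by
  classical
  unfold aCard
  apply Finset.card_bij (fun i _ => Fin.castLE hml i)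
  · intro i hi
    simp at hi ⊢
    obtain ⟨j, hj, hji⟩ := hi
    have : Fin.castLE hml i = j := by ext; simp [hji]
    rwa [this]
  · intro a _ b _ h
    simpa using h
  · intro b hb
    simp at hb
    exact ⟨⟨b, hb.2⟩, by simpa using ⟨b, hb.1, rfl⟩, by ext; simp⟩

lemma sum_aCard {m l k : ℕ} (hl : l = m ∨ l = m + 1) (hk : 1 ≤ k) (A : ℝ) (hA0 : 0 ≤ A)
    (hA : (k : ℝ) ≤ m * A) :
    ∑ S ∈ Finset.powersetCard k (Finset.univ : Finset (Fin l)), A ^ (aCard m S)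
      ≤ 2 * ((m * A) ^ k / k.factorial) := by
  classical
  have hch : ∀ j, (m.choose j : ℝ) * A ^ j ≤ (m * A) ^ j / j.factorial := by
    intro j
    rw [mul_pow, mul_div_right_comm]
    exact mul_le_mul_of_nonneg_right (Nat.choose_le_pow_div j m) (by positivity)
  have hnn : 0 ≤ (m * A) ^ k / k.factorial := by positivity
  rcases hl with rfl | rfl
  · have : ∀ S ∈ Finset.powersetCard k (Finset.univ : Finset (Fin l)), A ^ (aCard l S) = A ^ k := by
      intro S hS
      rw [aCard_eq le_rfl, Finset.filter_true_of_mem (fun j _ => j.2), (Finset.mem_powersetCard.1 hS).2]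
    rw [Finset.sum_congr rfl this]
    simp
    linarith [hch k]
  · have ha : ∀ S ∈ Finset.powersetCard k (Finset.univ : Finset (Fin (m+1))),
        A ^ (aCard m S) = if Fin.last m ∈ S then A ^ (k-1) else A ^ k := by
      intro S hS
      have hS := (Finset.mem_powersetCard.1 hS).2
      have : (S.filter fun j : Fin _ => (j : ℕ) < m) = S.erase (Fin.last m) := by
        ext x
        rw [Finset.mem_filter, Finset.mem_erase, Ne, Fin.ext_iff, Fin.val_last]
        have := x.2
        constructor
        · rintro ⟨h1, h2⟩; exact ⟨by omega, h1⟩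
        · rintro ⟨h1, h2⟩; exact ⟨h2, by omega⟩
      rw [aCard_eq (Nat.le_succ m), this]
      split_ifs with h
      · rw [Finset.card_erase_of_mem h, hS]
      · rw [Finset.erase_eq_of_notMem h, hS]
    rw [Finset.sum_congr rfl ha, Finset.sum_ite, Finset.sum_const, Finset.sum_const]
    simp only [nsmul_eq_mul]
    have hce : (Finset.univ.erase (Fin.last m)).card = m := by simp
    have c1 : ((Finset.powersetCard k (Finset.univ : Finset (Fin (m+1)))).filter
        fun S => Fin.last m ∈ S).card ≤ m.choose (k-1) := by
      rw [← hce, ← Finset.card_powersetCard, hce]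
      apply Finset.card_le_card_of_injOn (fun S => S.erase (Fin.last m))
      · intro S hS
        simp at hS
        simp [Finset.mem_powersetCard, Finset.erase_subset_erase, Finset.card_erase_of_mem hS.2, hS.1]
      · intro S hS T hT h
        simp at hS hT h
        rw [← Finset.insert_erase hS.2, ← Finset.insert_erase hT.2, h]
    have c2 : ((Finset.powersetCard k (Finset.univ : Finset (Fin (m+1)))).filter
        fun S => ¬ Fin.last m ∈ S).card ≤ m.choose k := by
      rw [← hce, ← Finset.card_powersetCard, hce]
      apply Finset.card_le_card
      intro S hS
      simp at hS
      simp [Finset.mem_powersetCard, hS.1, Finset.subset_erase, hS.2]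
    have d1 : (m * A) ^ (k-1) / (k-1).factorial ≤ (m * A) ^ k / k.factorial := by
      obtain ⟨j, rfl⟩ : ∃ j, k = j + 1 := ⟨k - 1, by omega⟩
      simp only [Nat.add_sub_cancel]
      rw [Nat.factorial_succ, div_le_div_iff₀ (by positivity) (by positivity), pow_succ]
      have h5 : 0 ≤ (m * A) ^ j * (j.factorial : ℝ) := by positivity
      have := mul_le_mul_of_nonneg_left hA h5
      push_cast at this ⊢
      linarith
    have e1 : (((Finset.powersetCard k (Finset.univ : Finset (Fin (m+1)))).filter
        fun S => Fin.last m ∈ S).card : ℝ) * A ^ (k-1) ≤ m.choose (k-1) * A ^ (k-1) := by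
      gcongr
    have e2 : (((Finset.powersetCard k (Finset.univ : Finset (Fin (m+1)))).filter
        fun S => ¬ Fin.last m ∈ S).card : ℝ) * A ^ k ≤ m.choose k * A ^ k := by
      gcongr
    linarith [hch k, hch (k-1)]

lemma aCard_le {m l : ℕ} (hml : m ≤ l) (S : Finset (Fin l)) : aCard m S ≤ S.card := by
  rw [aCard_eq hml]; exact Finset.card_filter_le _ _

/-- The Chernoff bound. -/
lemma chernoff {n m l k : ℕ} (p t : ℝ) (h0 : 0 < p) (ht0 : 0 < t) (ht1 : t ≤ 1)
    (hl : l = m ∨ l = m + 1) (hk : 1 ≤ k) (hkm : k ≤ m) (hpm : 1 ≤ p * m) (hkp : k * p ≤ 1) :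
    (∫ M, (({S : Finset (Fin l) | S.card = k ∧
              ((uniqueNbrSet (Matrix.of M) S).ncard : ℝ) < alphaFn n k * k}).ncard : ℝ)
            ∂(iidRectLaw m l p)) ≤
      2 * ((m * (t + k * p)) ^ k / k.factorial) *
        Real.exp (-((m - k) * ((1 - t) * (k * p * (1 - k * p))))) *
          Real.exp (-(alphaFn n k * k * Real.log t)) := by
  classical
  have hk1 : (1:ℝ) ≤ k := by exact_mod_cast hk
  have h1 : p ≤ 1 := by nlinarith
  set X := alphaFn n k * k with hX
  set E := Real.exp (-(X * Real.log t)) with hE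
  set b := (1 - t) * (k * p * (1 - k * p)) with hb
  have hb0 : 0 ≤ b := by
    rw [hb]
    have : 0 ≤ 1 - k * p := by linarith
    have : 0 ≤ 1 - t := by linarith
    positivity
  have hpt : ∀ M : Fin m → Fin l → ℝ,
      (({S : Finset (Fin l) | S.card = k ∧
              ((uniqueNbrSet (Matrix.of M) S).ncard : ℝ) < X}).ncard : ℝ) ≤
      ∑ S ∈ Finset.powersetCard k (Finset.univ : Finset (Fin l)), E * ∏ i, hRow t S i (M i) := by
    intro M
    have hset : {S : Finset (Fin l) | S.card = k ∧
              ((uniqueNbrSet (Matrix.of M) S).ncard : ℝ) < X} =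
        (((Finset.powersetCard k (Finset.univ : Finset (Fin l))).filter fun S =>
          ((uniqueNbrSet (Matrix.of M) S).ncard : ℝ) < X : Finset (Finset (Fin l))) :
            Set (Finset (Fin l))) := by
      ext S; simp [Finset.mem_powersetCard]
    rw [hset, Set.ncard_coe_finset, Finset.card_filter]
    push_cast
    apply Finset.sum_le_sum
    intro S _
    have hp := hRow_prod_ge t ht0.le ht1 S M
    have hE0 : 0 < E := Real.exp_pos _
    split_ifs with h
    · refine le_trans ?_ (mul_le_mul_of_nonneg_left hp hE0.le)
      rw [← Real.rpow_natCast, Real.rpow_def_of_pos ht0, hE, ← Real.exp_add]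
      apply Real.one_le_exp
      have := Real.log_nonpos ht0.le ht1
      nlinarith
    · exact mul_nonneg hE0.le (le_trans (by positivity) hp)
  have hint : ∀ S ∈ Finset.powersetCard k (Finset.univ : Finset (Fin l)),
      Integrable (fun M : Fin m → Fin l → ℝ => E * ∏ i, hRow t S i (M i)) (iidRectLaw m l p) :=
    fun S _ => (hRow_prod_int p t h0.le h1 S).1.const_mul E
  refine le_trans (integral_mono_of_nonneg (Filter.Eventually.of_forall fun M => by positivity)
    (integrable_finsetSum _ hint) (Filter.Eventually.of_forall hpt)) ?_
  rw [integral_finsetSum _ hint]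
  have hS : ∀ S ∈ Finset.powersetCard k (Finset.univ : Finset (Fin l)),
      ∫ M, E * ∏ i, hRow t S i (M i) ∂(iidRectLaw m l p) ≤
        (t + k * p) ^ (aCard m S) * (Real.exp (-((m - k) * b)) * E) := by
    intro S hS
    have hS := (Finset.mem_powersetCard.1 hS).2
    rw [integral_const_mul, (hRow_prod_int p t h0.le h1 S).2, hS]
    have hak : aCard m S ≤ k := hS ▸ aCard_le (by omega) S
    have hbern : 1 - k * p ≤ (1 - p) ^ (k - 1) := by
      have := one_add_mul_le_pow (a := -p) (by linarith) (k - 1)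
      rw [Nat.cast_sub hk] at this
      push_cast at this
      rw [← sub_eq_add_neg] at this
      nlinarith
    have hB : 1 - (1 - t) * (k * (p * (1 - p) ^ (k - 1))) ≤ Real.exp (-b) := by
      have h6 : b ≤ (1 - t) * (k * (p * (1 - p) ^ (k - 1))) := by
        rw [hb, mul_assoc (k:ℝ)]
        have : 0 ≤ 1 - t := by linarith
        gcongr
      linarith [Real.add_one_le_exp (-b)]
    have hB0 : 0 ≤ 1 - (1 - t) * (k * (p * (1 - p) ^ (k - 1))) := by
      have q0 : 0 ≤ (1 - p) ^ (k - 1) := pow_nonneg (by linarith) _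
      have q1 : (1 - p) ^ (k - 1) ≤ 1 := pow_le_one₀ (by linarith) (by linarith)
      have q2 : k * (p * (1 - p) ^ (k - 1)) ≤ 1 := by
        rw [← mul_assoc]
        have : 0 ≤ k * p := by positivity
        nlinarith
      have q3 : 0 ≤ k * (p * (1 - p) ^ (k - 1)) := by positivity
      nlinarith
    have hBp : (1 - (1 - t) * (k * (p * (1 - p) ^ (k - 1)))) ^ (m - aCard m S)
        ≤ Real.exp (-((m - k) * b)) := by
      refine le_trans (pow_le_pow_left₀ hB0 hB _) ?_
      rw [← Real.exp_nat_mul]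
      apply Real.exp_le_exp.2
      rw [Nat.cast_sub (hak.trans hkm)]
      have : (aCard m S : ℝ) ≤ k := by exact_mod_cast hak
      nlinarith
    have hE0 : 0 < E := Real.exp_pos _
    have : 0 ≤ (t + k * p) ^ (aCard m S) := by positivity
    calc _ = (t + k * p) ^ (aCard m S) *
      ((1 - (1 - t) * (k * (p * (1 - p) ^ (k - 1)))) ^ (m - aCard m S) * E) := by ring
      _ ≤ _ := by gcongr
  refine le_trans (Finset.sum_le_sum hS) ?_
  rw [← Finset.sum_mul, mul_assoc (2 * _)]
  apply mul_le_mul_of_nonneg_right _ (by positivity)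
  apply sum_aCard hl hk _ (by positivity)
  have : (0:ℝ) ≤ m * t := by positivity
  nlinarith

set_option maxHeartbeats 1600000 in
theorem unique_neighbour_expansion_iid (δ : ℝ) (hδ : 0 < δ) :
    ∃ c : ℝ, 0 < c ∧ ∃ C : ℝ, 0 < C ∧
      ∀ (n m l : ℕ) (p : ℝ), 0 < n → (l = m ∨ l = m + 1) →
        (m : ℝ) / n ∈ Set.Icc (1 / 2 : ℝ) 2 →
        p * m ∈ Set.Icc (1 + δ) δ⁻¹ →
        ∀ k : ℕ, (k : ℝ) ≤ c * n →
          (∫ M, (({S : Finset (Fin l) | S.card = k ∧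
              ((uniqueNbrSet (Matrix.of M) S).ncard : ℝ) < alphaFn n k * k}).ncard : ℝ)
            ∂(iidRectLaw m l p)) ≤ C * Real.exp (-(c * k)) := by
  set D := δ⁻¹ with hD
  have hD0 : 0 < D := inv_pos.2 hδ
  set η := δ - Real.log (1 + δ) with hη
  have hη0 : 0 < η := by
    have := Real.log_lt_sub_one_of_pos (x := 1 + δ) (by linarith) (by linarith)
    linarith
  set ε := min (η / 8) 1 with hε
  have hε0 : 0 < ε := lt_min (by linarith) one_pos
  have hε1 : ε ≤ 1 := min_le_right _ _
  have hε2 : ε ≤ η / 8 := min_le_left _ _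
  set F := -Real.log ε with hF
  have hF0 : 0 ≤ F := by have := Real.log_nonpos hε0.le hε1; linarith
  set L := max 1 ((1 + F) * 4 / η) with hL
  have hL1 : 1 ≤ L := le_max_left _ _
  have hL2 : (1 + F) * 4 / η ≤ L := le_max_right _ _
  set K := D * (3 + 2 * D) with hK
  have hK0 : 0 < K := by positivity
  obtain ⟨c, hc0, hc1, hc2, hc3, hc4, hc5⟩ : ∃ c : ℝ, 0 < c ∧ c ≤ Real.exp (-L) ∧ c ≤ η / 4 ∧
      K * c ≤ η / 4 ∧ 2 * D * c ≤ 1 ∧ 2 * c ≤ 1 := by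
    refine ⟨min (Real.exp (-L)) (min (η / 4) (min (η / 4 / K) (min (1 / (2 * D)) (1 / 2)))),
      by positivity, min_le_left _ _, (min_le_right _ _).trans (min_le_left _ _), ?_, ?_, ?_⟩
    · rw [← le_div_iff₀' hK0]
      exact (min_le_right _ _).trans ((min_le_right _ _).trans (min_le_left _ _))
    · rw [← le_div_iff₀' (by positivity)]
      exact (min_le_right _ _).trans ((min_le_right _ _).trans
        ((min_le_right _ _).trans (min_le_left _ _)))
    · rw [← le_div_iff₀' (by positivity)]
      exact (min_le_right _ _).trans ((min_le_right _ _).trans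
        ((min_le_right _ _).trans (min_le_right _ _)))
  refine ⟨c, hc0, 2, two_pos, ?_⟩
  intro n m l p hn hl hmn hpm k hk
  rcases Nat.eq_zero_or_pos k with rfl | hkpos
  · have : ∀ M : Fin m → Fin l → ℝ, (({S : Finset (Fin l) | S.card = 0 ∧
              ((uniqueNbrSet (Matrix.of M) S).ncard : ℝ) < alphaFn n (0:ℕ) * (0:ℕ)}).ncard : ℝ)
              = 0 := by
      intro M
      have : {S : Finset (Fin l) | S.card = 0 ∧
              ((uniqueNbrSet (Matrix.of M) S).ncard : ℝ) < alphaFn n (0:ℕ) * (0:ℕ)} = ∅ := by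
        ext S
        simp
      rw [this]; simp
    simp_rw [this]
    simp
  have hn0 : (0:ℝ) < n := by exact_mod_cast hn
  have hk1 : (1:ℝ) ≤ k := by exact_mod_cast hkpos
  have hk0 : (0:ℝ) < k := by linarith
  have hmn1 : (n:ℝ) ≤ 2 * m := by
    have := hmn.1
    rw [le_div_iff₀ hn0] at this; linarith
  have hm0 : (0:ℝ) < m := by linarith
  obtain ⟨hd1, hd2⟩ := hpm
  have hp0 : 0 < p := by
    by_contra h
    push Not at h
    nlinarith
  set d := p * m with hd
  have hd0 : 0 < d := by positivity
  set κ := (k:ℝ) / n with hκ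
  have hκ0 : 0 < κ := by positivity
  have hκc : κ ≤ c := by rw [hκ, div_le_iff₀ hn0]; exact hk
  have hkm2 : (k:ℝ) / m ≤ 2 * κ := by
    rw [hκ, div_le_iff₀ hm0]
    have : 2 * ((k:ℝ) / n) * m = k * (2 * m) / n := by ring
    rw [this, le_div_iff₀ hn0]
    gcongr
  have hkp : k * p = d * (k / m) := by rw [hd]; field_simp
  have hkp2 : k * p ≤ 2 * D * c := by
    rw [hkp]
    calc d * (k / m) ≤ D * (2 * c) := by
          gcongr
          linarith
      _ = _ := by ring
  have hkmR : (k:ℝ) ≤ m := by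
    have : (k:ℝ) / m ≤ 1 := by linarith
    rwa [div_le_one hm0] at this
  have hkm : k ≤ m := by exact_mod_cast hkmR
  set t := ε * κ with ht
  have ht0 : 0 < t := by positivity
  have htc : t ≤ c := by
    calc t ≤ 1 * κ := by rw [ht]; gcongr
      _ ≤ c := by linarith
  refine le_trans (chernoff p t hp0 ht0 (by linarith) hl hkpos hkm (by linarith) (by linarith)) ?_
  -- first factor
  have hκp : κ ≤ 2 * (k * p) := by
    rw [hκ, div_le_iff₀ hn0]
    have h1 : (1:ℝ) ≤ 2 * p * n := by
      have : (m:ℝ) ≤ 2 * n := by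
        have := hmn.2
        rwa [div_le_iff₀ hn0] at this
      nlinarith
    nlinarith
  have hA : m * (t + k * p) ≤ k * (d * (1 + 2 * ε)) := by
    have : t ≤ 2 * ε * (k * p) := by rw [ht]; nlinarith
    calc m * (t + k * p) ≤ m * (2 * ε * (k * p) + k * p) := by gcongr
      _ = _ := by rw [hd]; ring
  have hlogd : Real.log d ≤ d - 1 - η := by
    have h1 : Real.log (d / (1 + δ)) ≤ d / (1 + δ) - 1 := Real.log_le_sub_one_of_pos (by positivity)
    rw [Real.log_div (by positivity) (by positivity)] at h1
    have h2 : d / (1 + δ) - 1 ≤ d - 1 - δ := by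
      have : d / (1 + δ) - 1 = (d - 1 - δ) / (1 + δ) := by field_simp; ring
      rw [this]
      apply div_le_self <;> linarith
    linarith
  have f1 : (m * (t + k * p)) ^ k / k.factorial ≤
      Real.exp (k * (1 + (d - 1 - η) + 2 * ε)) := by
    have h1 : (k:ℝ) ^ k / k.factorial ≤ Real.exp k := Real.pow_div_factorial_le_exp _ hk0.le _
    have h2 : d * (1 + 2 * ε) ≤ Real.exp ((d - 1 - η) + 2 * ε) := by
      rw [Real.exp_add]
      have := Real.add_one_le_exp (2 * ε)
      have h3 : d ≤ Real.exp (d - 1 - η) := by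
        rw [← Real.log_le_iff_le_exp hd0]; exact hlogd
      gcongr
      linarith
    calc (m * (t + k * p)) ^ k / k.factorial ≤ (k * (d * (1 + 2 * ε))) ^ k / k.factorial := by gcongr
      _ = ((k:ℝ) ^ k / k.factorial) * (d * (1 + 2 * ε)) ^ k := by rw [mul_pow]; ring
      _ ≤ Real.exp k * (Real.exp ((d - 1 - η) + 2 * ε)) ^ k := by gcongr
      _ = _ := by
        rw [← Real.exp_nat_mul, ← Real.exp_add]
        congr 1; ring
  -- second factor
  have f2 : k * (d - η / 4) ≤ (m - k) * ((1 - t) * (k * p * (1 - k * p))) := by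
    have e : (m - k) * ((1 - t) * (k * p * (1 - k * p)))
        = k * (d * ((1 - k / m) * ((1 - t) * (1 - k * p)))) := by
      rw [hd]; field_simp
    rw [e]
    apply mul_le_mul_of_nonneg_left _ hk0.le
    set x := (k:ℝ) / m
    set y := (k:ℝ) * p
    have hx0 : 0 ≤ x := by positivity
    have hx1 : x ≤ 2 * c := by linarith
    have hy0 : 0 ≤ y := by positivity
    have h1 : 1 - (x + t + y) ≤ (1 - x) * ((1 - t) * (1 - y)) := by
      have a1 : 1 - (t + y) ≤ (1 - t) * (1 - y) := by nlinarith
      have a2 : 0 ≤ 1 - x := by linarith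
      have a3 := mul_le_mul_of_nonneg_left a1 a2
      nlinarith
    have h2 := mul_le_mul_of_nonneg_left h1 hd0.le
    have h3 : d * (x + t + y) ≤ D * (2 * c + c + 2 * D * c) := by gcongr
    have h4 : D * (2 * c + c + 2 * D * c) = K * c := by rw [hK]; ring
    linarith
  -- third factor
  have f3 : -(alphaFn n k * k * Real.log t) ≤ k * (η / 4) := by
    have hnk : (n:ℝ) / k = κ⁻¹ := by rw [hκ, inv_div]
    unfold alphaFn
    rw [hnk, Real.log_inv, ht, Real.log_mul hε0.ne' hκ0.ne']
    set lam := - Real.log κ with hlam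
    have hl1 : L ≤ lam := by
      have := Real.log_le_log hκ0 (hκc.trans hc1)
      rw [Real.log_exp] at this
      linarith
    have hlam0 : 0 < lam := by linarith
    have e : -((lam ^ 2)⁻¹ * k * (Real.log ε + Real.log κ)) = k * ((F + lam) / lam ^ 2) := by
      have q1 : Real.log κ = -lam := by rw [hlam]; ring
      have q2 : Real.log ε = -F := by rw [hF]; ring
      rw [q1, q2, div_eq_mul_inv]; ring
    rw [e]
    apply mul_le_mul_of_nonneg_left _ hk0.le
    rw [div_le_iff₀ (by positivity)]
    have h7 : (1 + F) * 4 ≤ lam * η := by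
      have := hL2.trans hl1
      rwa [div_le_iff₀ hη0] at this
    nlinarith
  calc _ ≤ 2 * Real.exp (k * (1 + (d - 1 - η) + 2 * ε)) * Real.exp (-(k * (d - η / 4))) *
        Real.exp (k * (η / 4)) := by gcongr
    _ = 2 * Real.exp (k * (1 + (d - 1 - η) + 2 * ε) + -(k * (d - η / 4)) + k * (η / 4)) := by
        rw [Real.exp_add, Real.exp_add]; ring
    _ ≤ 2 * Real.exp (-(c * k)) := by
        gcongr
        have q1 : 2 * ε ≤ η / 4 := by linarith
        have q2 : (k:ℝ) * (2 * ε) ≤ k * (η / 4) := mul_le_mul_of_nonneg_left q1 hk0.le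
        have q3 : (k:ℝ) * c ≤ k * (η / 4) := mul_le_mul_of_nonneg_left hc2 hk0.le
        linarith
end
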